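/- arXiv:1301.3552 — 2 statements merged into one kernel-verified Lean document; each statement's English description precedes it below -/
import Mathlib

section
/- Let (A,B,C,D) be a minimal realization of an m×m transfer function R that is negative imaginary, and let (A_s,B_s,C_s,D_s) be a minimal realization of an m×m transfer function R_s that is strictly negative imaginary. Assume D·D_s = 0 and D_s ⪰ 0. Then I − D_sD and I − DD_s are invertible, all eigenvalues of the m×m real matrix R(0)·R_s(0) = (D − CA⁻¹B)(D_s − C_sA_s⁻¹B_s) are real, and the closed-loop state matrix of the positive feedback interconnection, Ā = [[A + B(I−D_sD)⁻¹D_sC, B(I−D_sD)⁻¹C_s], [B_s(I−DD_s)⁻¹C, A_s + B_s(I−DD_s)⁻¹DC_s]], is Hurwitz if and only if every eigenvalue of R(0)·R_s(0) is strictly less than 1. -/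
open Matrix Filter Topology ComplexOrder

/-- The (complex) eigenvalues of a real square matrix. -/
noncomputable def eigs {k : Type*} [Fintype k] [DecidableEq k] (A : Matrix k k ℝ) : Set ℂ :=
  spectrum ℂ (A.map Complex.ofReal)

/-- A real square matrix is Hurwitz if all of its (complex) eigenvalues have negative real
part. -/
noncomputable def IsHurwitz {k : Type*} [Fintype k] [DecidableEq k] (A : Matrix k k ℝ) : Prop :=
  ∀ μ ∈ eigs A, μ.re < 0

/-- Transfer function `R(s) = C (sI - A)⁻¹ B + D` of a real state-space system, as a
complex matrix. -/
noncomputable def tf {n m : ℕ} (A : Matrix (Fin n) (Fin n) ℝ) (B : Matrix (Fin n) (Fin m) ℝ)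
    (C : Matrix (Fin m) (Fin n) ℝ) (D : Matrix (Fin m) (Fin m) ℝ) (s : ℂ) :
    Matrix (Fin m) (Fin m) ℂ :=
  C.map (Complex.ofReal) * (s • (1 : Matrix (Fin n) (Fin n) ℂ) - A.map Complex.ofReal)⁻¹ *
      B.map Complex.ofReal + D.map Complex.ofReal

/-- A state-space realization `(A,B,C,D)` is minimal if the controllability matrix and the
observability matrix both have rank `n`. -/
def IsMinimal {n m : ℕ} (A : Matrix (Fin n) (Fin n) ℝ) (B : Matrix (Fin n) (Fin m) ℝ)
    (C : Matrix (Fin m) (Fin n) ℝ) : Prop :=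
  (Matrix.of fun (i : Fin n) (p : Fin n × Fin m) => (A ^ (p.1 : ℕ) * B) i p.2).rank = n ∧
  (Matrix.of fun (p : Fin n × Fin m) (i : Fin n) => (C * A ^ (p.1 : ℕ)) p.2 i).rank = n

/-- The system `(A,B,C,D)` is negative imaginary (NI). -/
noncomputable def IsNI {n m : ℕ} (A : Matrix (Fin n) (Fin n) ℝ) (B : Matrix (Fin n) (Fin m) ℝ)
    (C : Matrix (Fin m) (Fin n) ℝ) (D : Matrix (Fin m) (Fin m) ℝ) : Prop :=
  (∀ μ ∈ eigs A, μ ≠ 0 ∧ μ.re ≤ 0) ∧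
  (∀ ω : ℝ, 0 < ω → (Complex.I * ω) ∉ eigs A →
    (Complex.I • (tf A B C D (Complex.I * ω) - (tf A B C D (Complex.I * ω))ᴴ)).PosSemidef) ∧
  (∀ ω : ℝ, 0 < ω → (Complex.I * ω) ∈ eigs A →
    ∃ K : Matrix (Fin m) (Fin m) ℂ,
      Tendsto (fun s : ℂ => (s - Complex.I * ω) • Complex.I • tf A B C D s)
        (𝓝[≠] (Complex.I * ω)) (𝓝 K) ∧ K.PosSemidef)

/-- The system `(A,B,C,D)` is strictly negative imaginary (SNI). -/
noncomputable def IsSNI {n m : ℕ} (A : Matrix (Fin n) (Fin n) ℝ) (B : Matrix (Fin n) (Fin m) ℝ)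
    (C : Matrix (Fin m) (Fin n) ℝ) (D : Matrix (Fin m) (Fin m) ℝ) : Prop :=
  IsHurwitz A ∧
  (∀ ω : ℝ, 0 < ω →
    (Complex.I • (tf A B C D (Complex.I * ω) - (tf A B C D (Complex.I * ω))ᴴ)).PosDef)

/-!
For a negative imaginary transfer function `R` and an input `u`, the scalar function
`g s = u* R(s) u` has the property that `(g 0 - g s) / s` is positive real, by the minimum principle
on the right half plane. Letting `s → ∞` along the positive reals gives `R(0) ⪰ R(∞) = D`. Hence
`Rₛ(0) ⪰ Dₛ ⪰ 0`, and `R(0) Rₛ(0)`, a Hermitian matrix times a positive semidefinite one, has real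
eigenvalues.

If all eigenvalues of `R(0) Rₛ(0)` are less than `1`, then `R` is deformed along `t ∈ [0, 1]` by
moving its poles to the left by `1 - t`, with fixed dc gain, and multiplying it by `t`. Positive
realness of `(g 0 - g s) / s` keeps the system negative imaginary. At `t = 0` the loop is block
triangular and stable. Strictness of `Rₛ` excludes nonzero imaginary eigenvalues of the loop, and an
eigenvalue `0` at the parameter `t` would make `1 / t ≥ 1` an eigenvalue of `R(0) Rₛ(0)`. So no
eigenvalue ever crosses the imaginary axis.

Conversely, a stable closed loop is again negative imaginary, so its dc gain is positive
semidefinite. If `R(0) Rₛ(0) w = μ w`, that dc gain maps `(1 - μ) w` to `Rₛ(0) w`, which excludes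
`μ ≥ 1`.
-/

section Stability

variable {κ κ' : Type*} [Fintype κ] [DecidableEq κ] [Fintype κ'] [DecidableEq κ']

lemma mem_spectrum_iff_exists_mulVec_eq {M : Matrix κ κ ℂ} {μ : ℂ} :
    μ ∈ spectrum ℂ M ↔ ∃ v : κ → ℂ, v ≠ 0 ∧ M *ᵥ v = μ • v := by
  rw [spectrum.mem_iff, isUnit_iff_isUnit_det, isUnit_iff_ne_zero, not_not,
    ← exists_mulVec_eq_zero_iff]
  refine exists_congr fun v => and_congr_right fun _ => ?_
  rw [Algebra.algebraMap_eq_smul_one, sub_mulVec, smul_mulVec, one_mulVec, sub_eq_zero, eq_comm]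

/-- A complex matrix is stable if its spectrum lies in the open left half plane; `IsHurwitz A`
unfolds to stability of the complexification of `A`. -/
def Stable (M : Matrix κ κ ℂ) : Prop :=
  ∀ μ ∈ spectrum ℂ M, μ.re < 0

lemma Stable.notMem_spectrum {M : Matrix κ κ ℂ} (hM : Stable M) {s : ℂ} (hs : 0 ≤ s.re) :
    s ∉ spectrum ℂ M :=
  fun h => (hM s h).not_ge hs

open scoped Matrix.Norms.Operator in
lemma isOpen_setOf_stable : IsOpen {M : Matrix κ κ ℂ | Stable M} :=
  upperHemicontinuous_iff_isOpen_preimage_Iic.1 (upperHemicontinuous_spectrum ℂ (Matrix κ κ ℂ))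
    {z : ℂ | z.re < 0} (isOpen_lt Complex.continuous_re continuous_const)

lemma pow_natDegree_le_norm_eval {p : Polynomial ℂ} (hp : p.Monic) {r : ℝ} (hr : 0 ≤ r) {z : ℂ}
    (h : ∀ a ∈ p.roots, r ≤ ‖z - a‖) : r ^ p.natDegree ≤ ‖p.eval z‖ := by
  have hs : p.Splits := IsAlgClosed.splits p
  calc r ^ p.natDegree = (p.roots.map fun _ => r).prod := by
        rw [Multiset.map_const', Multiset.prod_replicate, hs.natDegree_eq_card_roots]
    _ ≤ (p.roots.map fun a => ‖z - a‖).prod :=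
        Multiset.prod_map_le_prod_map₀ _ _ (fun _ _ => hr) h
    _ = ‖p.eval z‖ := by
        rw [hs.eval_eq_prod_roots_of_monic hp]
        simpa only [Multiset.map_map] using!
          (map_multiset_prod (normHom (α := ℂ)) (p.roots.map fun a => z - a)).symm

lemma Stable.re_pow_card_le_norm_eval_charpoly {M : Matrix κ κ ℂ} (hM : Stable M) {z : ℂ}
    (hz : 0 < z.re) : z.re ^ Fintype.card κ ≤ ‖M.charpoly.eval z‖ := by
  rw [← charpoly_natDegree_eq_dim M]
  refine pow_natDegree_le_norm_eval M.charpoly_monic hz.le fun a ha => ?_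
  have ha' : a.re < 0 :=
    hM a (mem_spectrum_iff_isRoot_charpoly.2 (Polynomial.isRoot_of_mem_roots ha))
  calc z.re ≤ (z - a).re := by rw [Complex.sub_re]; linarith
    _ ≤ ‖z - a‖ := Complex.re_le_norm _

lemma re_nonpos_of_mem_closure_stable {M : Matrix κ κ ℂ} (hM : M ∈ closure {N | Stable N}) {μ : ℂ}
    (hμ : μ ∈ spectrum ℂ M) : μ.re ≤ 0 := by
  by_contra! hre
  have hclosed : IsClosed {N : Matrix κ κ ℂ | μ.re ^ Fintype.card κ ≤ ‖N.charpoly.eval μ‖} := by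
    simp_rw [eval_charpoly]
    exact isClosed_le continuous_const (by fun_prop)
  have hle : μ.re ^ Fintype.card κ ≤ ‖M.charpoly.eval μ‖ :=
    closure_minimal (fun N hN => hN.re_pow_card_le_norm_eval_charpoly hre) hclosed hM
  rw [mem_spectrum_iff_isRoot_charpoly.1 hμ, norm_zero] at hle
  exact hle.not_gt (pow_pos hre _)

lemma Stable.of_path {M : ℝ → Matrix κ κ ℂ} (hM : Continuous M) (h0 : Stable (M 0))
    (haxis : ∀ t ∈ Set.Icc (0 : ℝ) 1, ∀ μ ∈ spectrum ℂ (M t), μ.re ≠ 0) : Stable (M 1) := by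
  have hsub : Set.Icc (0 : ℝ) 1 ⊆ M ⁻¹' {N | Stable N} := by
    refine isPreconnected_Icc.subset_of_closure_inter_subset (isOpen_setOf_stable.preimage hM)
      ⟨0, Set.left_mem_Icc.2 zero_le_one, h0⟩ ?_
    rintro t ⟨ht, htI⟩ μ hμ
    exact (re_nonpos_of_mem_closure_stable (hM.closure_preimage_subset _ ht) hμ).lt_of_ne
      (haxis t htI μ hμ)
  exact hsub (Set.right_mem_Icc.2 zero_le_one)

lemma Stable.fromBlocks_zero₂₁ {M : Matrix κ κ ℂ} {N : Matrix κ' κ' ℂ} (hM : Stable M)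
    (hN : Stable N) (L : Matrix κ κ' ℂ) : Stable (fromBlocks M L 0 N) := by
  intro μ hμ
  rw [mem_spectrum_iff_isRoot_charpoly, charpoly_fromBlocks_zero₂₁, Polynomial.root_mul] at hμ
  exact hμ.elim (fun h => hM μ (mem_spectrum_iff_isRoot_charpoly.2 h))
    fun h => hN μ (mem_spectrum_iff_isRoot_charpoly.2 h)

end Stability

section RealPart

open Complex Bornology

lemma exists_continuousAt_eq_div_add {h : ℂ → ℂ} {c k : ℂ}
    (hd : ∀ᶠ s in 𝓝[≠] c, DifferentiableAt ℂ h s)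
    (hlim : Tendsto (fun s => (s - c) * h s) (𝓝[≠] c) (𝓝 k)) :
    ∃ r : ℂ → ℂ, ContinuousAt r c ∧ ∀ s ≠ c, h s = k / (s - c) + r s := by
  let g : ℂ → ℂ := Function.update (fun s => (s - c) * h s) c k
  have hg : AnalyticAt ℂ g c := by
    refine analyticAt_of_differentiable_on_punctured_nhds_of_continuousAt ?_
      (continuousAt_update_same.2 hlim)
    filter_upwards [hd, self_mem_nhdsWithin] with s hs hsc
    refine ((differentiableAt_id.sub_const c).mul hs).congr_of_eventuallyEq ?_
    filter_upwards [isOpen_compl_singleton.mem_nhds hsc] with z hz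
    exact Function.update_of_ne hz _ _
  refine ⟨dslope g c, continuousAt_dslope_same.2 hg.differentiableAt, fun s hs => ?_⟩
  have hne : s - c ≠ 0 := sub_ne_zero.2 hs
  simp only [dslope_of_ne _ hs, slope_def_field, g, Function.update_self, Function.update_of_ne hs]
  field_simp
  ring

lemma tendsto_add_I_mul_nhdsNE (c : ℂ) :
    Tendsto (fun ω : ℝ => c + I * ω) (𝓝[≠] 0) (𝓝[≠] c) := by
  refine tendsto_nhdsWithin_iff.2 ⟨?_, ?_⟩
  · have hcont : Continuous fun ω : ℝ => c + I * ω := by fun_prop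
    simpa using (hcont.tendsto 0).mono_left nhdsWithin_le_nhds
  · filter_upwards [self_mem_nhdsWithin] with ω hω
    simpa using hω

/-- The polar part `k / (s - c)` is purely imaginary on the vertical line through `c` and has
nonnegative real part to the right of it. -/
lemma eventually_neg_lt_re {h : ℂ → ℂ} {c : ℂ} {k : ℝ} (hk : 0 ≤ k)
    (hd : ∀ᶠ s in 𝓝[≠] c, DifferentiableAt ℂ h s)
    (hlim : Tendsto (fun s => (s - c) * h s) (𝓝[≠] c) (𝓝 (k : ℂ)))
    (hline : ∀ᶠ ω : ℝ in 𝓝[≠] 0, 0 ≤ (h (c + I * ω)).re) {η : ℝ} (hη : 0 < η) :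
    ∀ᶠ s in 𝓝[{s | c.re < s.re}] c, -η < (h s).re := by
  obtain ⟨r, hr, hhr⟩ := exists_continuousAt_eq_div_add hd hlim
  have hre : ContinuousAt (fun s => (r s).re) c := continuous_re.continuousAt.comp hr
  have hrc : 0 ≤ (r c).re := by
    have hlim' := hre.tendsto.comp ((tendsto_add_I_mul_nhdsNE c).mono_right nhdsWithin_le_nhds)
    refine ge_of_tendsto hlim' ?_
    filter_upwards [hline, self_mem_nhdsWithin] with ω hω hω0
    have hω0' : ω ≠ 0 := hω0
    have himag : ((k : ℂ) / (c + I * ω - c)).re = 0 := by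
      simp [add_sub_cancel_left, div_re]
    rwa [hhr _ (by simpa using hω0'), add_re, himag, zero_add] at hω
  filter_upwards [nhdsWithin_le_nhds (hre.eventually (lt_mem_nhds (by linarith : -η < (r c).re))),
    self_mem_nhdsWithin] with s hs hsre
  have hpos : 0 < (s - c).re := by simpa using hsre
  have hpolar : 0 ≤ ((k : ℂ) / (s - c)).re := by
    rw [div_re, ofReal_re, ofReal_im, zero_mul, zero_div, add_zero]
    have := normSq_nonneg (s - c)
    positivity
  rw [hhr s (by rintro rfl; simp at hpos), add_re]
  linarith

lemma re_eq_of_isMinOn_re {h : ℂ → ℂ} {U : Set ℂ} (hU : IsPreconnected U) (hUo : IsOpen U)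
    (hd : DifferentiableOn ℂ h U) {z : ℂ} (hz : z ∈ U) (hmin : IsMinOn (fun s => (h s).re) U z)
    {s : ℂ} (hs : s ∈ U) : (h s).re = (h z).re := by
  have hmax : IsMaxOn (norm ∘ fun s => exp (-h s)) U z := fun w hw => by
    simpa [norm_exp] using hmin hw
  have hconst := norm_eqOn_of_isPreconnected_of_isMaxOn hU hUo hd.neg.cexp hz hmax hs
  simpa [norm_exp] using hconst

lemma isCompact_setOf_re_le {h : ℂ → ℂ} (hd : ∀ s : ℂ, 0 < s.re → DifferentiableAt ℂ h s)
    (hinf : Tendsto h (cobounded ℂ) (𝓝 0)) {η : ℝ} (hη : 0 < η)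
    (haxis : ∀ c : ℂ, c.re = 0 → ∀ᶠ s in 𝓝[{s | 0 < s.re}] c, -η < (h s).re) :
    IsCompact {s : ℂ | 0 < s.re ∧ (h s).re ≤ -η} := by
  refine Metric.isCompact_of_isClosed_isBounded (isClosed_iff_frequently.2 fun z hz => ?_) ?_
  · have hz0 : 0 ≤ z.re := (isClosed_le continuous_const continuous_re).mem_of_frequently_of_tendsto
      (hz.mono fun s hs => hs.1.le) tendsto_id
    rcases hz0.eq_or_lt with hz0 | hz0
    · have hev := eventually_nhdsWithin_iff.1 (haxis z hz0.symm)
      obtain ⟨s, ⟨hs, hle⟩, hlt⟩ := (hz.and_eventually hev).exists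
      exact absurd (hlt hs) hle.not_gt
    · have hcont : ContinuousAt (fun s => (h s).re) z :=
        continuous_re.continuousAt.comp (hd z hz0).continuousAt
      exact ⟨hz0, isClosed_Iic.mem_of_frequently_of_tendsto (hz.mono fun s hs => hs.2) hcont⟩
  · have hre : Tendsto (fun s => (h s).re) (cobounded ℂ) (𝓝 0) :=
      (continuous_re.tendsto 0).comp hinf
    rw [isBounded_def]
    filter_upwards [hre.eventually (lt_mem_nhds (neg_lt_zero.2 hη))] with s hs hmem
    exact hs.not_ge hmem.2

/-- The minimum principle is applied on a compact sublevel set: `Re h` is small near infinity and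
has no negative limits on the imaginary axis. -/
lemma re_nonneg_of_eventually_neg_lt_re {h : ℂ → ℂ}
    (hd : ∀ s : ℂ, 0 < s.re → DifferentiableAt ℂ h s) (hinf : Tendsto h (cobounded ℂ) (𝓝 0))
    (haxis : ∀ c : ℂ, c.re = 0 → ∀ η > 0, ∀ᶠ s in 𝓝[{s | 0 < s.re}] c, -η < (h s).re)
    {s : ℂ} (hs : 0 < s.re) : 0 ≤ (h s).re := by
  by_contra! hneg
  have hη : 0 < -(h s).re := neg_pos.2 hneg
  obtain ⟨z, ⟨hz, hzs⟩, hmin⟩ :=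
    (isCompact_setOf_re_le hd hinf hη fun c hc => haxis c hc _ hη).exists_isMinOn
      ⟨s, hs, (neg_neg _).ge⟩ (f := fun s => (h s).re) fun w hw =>
        (continuous_re.continuousAt.comp (hd w hw.1).continuousAt).continuousWithinAt
  rw [neg_neg] at hzs hmin
  have hminU : IsMinOn (fun s => (h s).re) {s | 0 < s.re} z := fun w hw => by
    rcases le_total (h w).re (h s).re with hws | hws
    · exact hmin ⟨hw, hws⟩
    · exact hzs.trans hws
  have hconst : ∀ x : ℝ, 0 < x → (h x).re = (h z).re := fun x hx =>
    re_eq_of_isMinOn_re (convex_halfSpace_re_gt 0).isPreconnected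
      (isOpen_lt continuous_const continuous_re)
      (fun w hw => (hd w hw).differentiableWithinAt) hz hminU (by simpa using hx)
  have hlim : Tendsto (fun x : ℝ => (h x).re) atTop (𝓝 0) :=
    (continuous_re.tendsto 0).comp (hinf.comp (RCLike.tendsto_ofReal_atTop_cobounded ℂ))
  have hzero : (h z).re = 0 := tendsto_nhds_unique
    (tendsto_const_nhds.congr' ((eventually_gt_atTop 0).mono fun x hx => (hconst x hx).symm)) hlim
  linarith

end RealPart

section Scalar

open Complex Bornology

/-- Scalar negative imaginary functions: `g` is holomorphic off the finite pole set `S`, tends to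
`d` at infinity, and satisfies the negative imaginary conditions on the whole imaginary axis. The
pole condition says that the residue of `g` at `iω` is `-iωk` with `k ≥ 0`. -/
structure IsNegImagFun (g : ℂ → ℂ) (S : Set ℂ) (d : ℂ) : Prop where
  finite_poles : S.Finite
  zero_notMem : 0 ∉ S
  re_nonpos : ∀ s ∈ S, s.re ≤ 0
  differentiableAt : ∀ s ∉ S, DifferentiableAt ℂ g s
  tendsto_cobounded : Tendsto g (cobounded ℂ) (𝓝 d)
  mul_im_nonpos : ∀ ω : ℝ, I * ω ∉ S → ω * (g (I * ω)).im ≤ 0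
  tendsto_pole : ∀ ω : ℝ, I * ω ∈ S → ∃ k : ℝ, 0 ≤ k ∧
    Tendsto (fun s => (s - I * ω) * g s) (𝓝[≠] (I * ω)) (𝓝 (-(I * ω) * k))

/-- The difference quotient `(g 0 - g s) / s`, which is positive real when `g` is negative
imaginary. -/
noncomputable def dcQuotient (g : ℂ → ℂ) (s : ℂ) : ℂ :=
  (g 0 - g s) / s

lemma eq_zero_of_mul_nonpos_of_tendsto {f : ℝ → ℝ} {l l' : Filter ℝ} [l.NeBot] [l'.NeBot] {a : ℝ}
    (hl : ∀ᶠ ω in l, 0 < ω ∧ ω * f ω ≤ 0) (hl' : ∀ᶠ ω in l', ω < 0 ∧ ω * f ω ≤ 0)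
    (hf : Tendsto f l (𝓝 a)) (hf' : Tendsto f l' (𝓝 a)) : a = 0 := by
  refine le_antisymm (le_of_tendsto hf ?_) (ge_of_tendsto hf' ?_)
  · filter_upwards [hl] with ω ⟨hω, hle⟩
    exact nonpos_of_mul_nonpos_right hle hω
  · filter_upwards [hl'] with ω ⟨hω, hle⟩
    exact nonneg_of_mul_nonpos_right hle hω

lemma eventually_notMem_nhdsNE {X : Type*} [TopologicalSpace X] [T1Space X] {S : Set X}
    (hS : S.Finite) (c : X) : ∀ᶠ s in 𝓝[≠] c, s ∉ S := by
  filter_upwards [nhdsNE_of_nhdsNE_sdiff_finite (x := c) univ_mem hS.to_subtype] with s hs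
  exact hs.2

namespace IsNegImagFun

variable {g : ℂ → ℂ} {S : Set ℂ} {d : ℂ}

lemma eventually_notMem_cobounded (hg : IsNegImagFun g S d) : ∀ᶠ s in cobounded ℂ, s ∉ S :=
  hg.finite_poles.isBounded

lemma im_zero (hg : IsNegImagFun g S d) : (g 0).im = 0 := by
  have hpath : Tendsto (fun ω : ℝ => I * (ω : ℂ)) (𝓝[≠] 0) (𝓝[≠] 0) := by
    simpa only [zero_add] using tendsto_add_I_mul_nhdsNE 0
  have hle : ∀ᶠ ω : ℝ in 𝓝[≠] 0, ω * (g (I * ω)).im ≤ 0 :=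
    (hpath.eventually (eventually_notMem_nhdsNE hg.finite_poles 0)).mono fun ω => hg.mul_im_nonpos ω
  have hlim : Tendsto (fun ω : ℝ => (g (I * ω)).im) (𝓝[≠] 0) (𝓝 (g 0).im) :=
    (continuous_im.tendsto _).comp ((hg.differentiableAt 0 hg.zero_notMem).continuousAt.tendsto.comp
      (hpath.mono_right nhdsWithin_le_nhds))
  exact eq_zero_of_mul_nonpos_of_tendsto (l := 𝓝[>] 0) (l' := 𝓝[<] 0)
    (eventually_mem_nhdsWithin.and (nhdsGT_le_nhdsNE 0 hle))
    (eventually_mem_nhdsWithin.and (nhdsLT_le_nhdsNE 0 hle))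
    (hlim.mono_left (nhdsGT_le_nhdsNE 0)) (hlim.mono_left (nhdsLT_le_nhdsNE 0))

lemma im_limit (hg : IsNegImagFun g S d) : d.im = 0 := by
  have hpath : Tendsto (fun ω : ℝ => I * (ω : ℂ)) (cobounded ℝ) (cobounded ℂ) :=
    tendsto_norm_atTop_iff_cobounded.1 (by
      simpa only [norm_mul, norm_I, one_mul, norm_real] using tendsto_norm_cobounded_atTop (E := ℝ))
  have hle : ∀ᶠ ω : ℝ in cobounded ℝ, ω * (g (I * ω)).im ≤ 0 :=
    (hpath.eventually hg.eventually_notMem_cobounded).mono fun ω => hg.mul_im_nonpos ω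
  have hlim : Tendsto (fun ω : ℝ => (g (I * ω)).im) (cobounded ℝ) (𝓝 d.im) :=
    (continuous_im.tendsto d).comp (hg.tendsto_cobounded.comp hpath)
  exact eq_zero_of_mul_nonpos_of_tendsto
    ((eventually_gt_atTop 0).and (IsOrderBornology.atTop_le_cobounded hle))
    ((eventually_lt_atBot 0).and (IsOrderBornology.atBot_le_cobounded hle))
    (hlim.mono_left IsOrderBornology.atTop_le_cobounded)
    (hlim.mono_left IsOrderBornology.atBot_le_cobounded)

lemma differentiableAt_dcQuotient (hg : IsNegImagFun g S d) {s : ℂ} (hs : s ∉ S) (hs0 : s ≠ 0) :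
    DifferentiableAt ℂ (dcQuotient g) s :=
  ((hg.differentiableAt s hs).const_sub _).div differentiableAt_id hs0

lemma tendsto_dcQuotient_cobounded (hg : IsNegImagFun g S d) :
    Tendsto (dcQuotient g) (cobounded ℂ) (𝓝 0) := by
  simpa only [mul_zero, ← div_eq_mul_inv, ← dcQuotient.eq_def] using
    (hg.tendsto_cobounded.const_sub (g 0)).mul (tendsto_inv₀_cobounded (α := ℂ))

lemma re_dcQuotient_I_mul_nonneg (hg : IsNegImagFun g S d) {ω : ℝ} (hω : I * ω ∉ S) :
    0 ≤ (dcQuotient g (I * ω)).re := by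
  have hre : (dcQuotient g (I * ω)).re = -(g (I * ω)).im / ω := by
    rw [dcQuotient, div_mul_eq_div_div, div_ofReal_re, div_I]
    simp [hg.im_zero]
  rw [hre, neg_div, neg_nonneg, div_eq_mul_inv]
  rcases eq_or_ne ω 0 with rfl | h0
  · simp
  · rw [show (g (I * ω)).im * ω⁻¹ = ω * (g (I * ω)).im * (ω⁻¹ * ω⁻¹) by field_simp]
    exact mul_nonpos_of_nonpos_of_nonneg (hg.mul_im_nonpos ω hω) (mul_self_nonneg _)

lemma tendsto_mul_dcQuotient (hg : IsNegImagFun g S d) (ω : ℝ) :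
    ∃ k : ℝ, 0 ≤ k ∧
      Tendsto (fun s => (s - I * ω) * dcQuotient g s) (𝓝[≠] (I * ω)) (𝓝 (k : ℂ)) := by
  set c : ℂ := I * ω
  have hsub : Tendsto (fun s => s - c) (𝓝[≠] c) (𝓝 0) := by
    simpa using ((continuous_sub_right c).tendsto c).mono_left nhdsWithin_le_nhds
  have hid : Tendsto (fun s : ℂ => s) (𝓝[≠] c) (𝓝 c) := nhdsWithin_le_nhds
  by_cases hc : c ∈ S
  · have hc0 : c ≠ 0 := fun h => hg.zero_notMem (h ▸ hc)
    obtain ⟨k, hk, hlim⟩ := hg.tendsto_pole ω hc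
    refine ⟨k, hk, ?_⟩
    have hquot := ((hsub.mul_const (g 0)).sub hlim).div hid hc0
    rw [zero_mul, zero_sub, neg_mul, neg_neg, mul_div_cancel_left₀ _ hc0] at hquot
    refine hquot.congr fun s => ?_
    rw [Pi.div_apply, dcQuotient, mul_div_assoc', mul_sub]
  · refine ⟨0, le_rfl, ?_⟩
    have hgc : Tendsto g (𝓝[≠] c) (𝓝 (g c)) :=
      (hg.differentiableAt c hc).continuousAt.tendsto.mono_left nhdsWithin_le_nhds
    rcases eq_or_ne c 0 with h0 | h0
    · have hlim := hgc.const_sub (g 0)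
      rw [h0, sub_self] at hlim
      rw [h0, ofReal_zero]
      refine hlim.congr' ?_
      filter_upwards [self_mem_nhdsWithin] with s hs
      rw [dcQuotient, sub_zero, mul_div_cancel₀ _ hs]
    · simpa [dcQuotient] using hsub.mul ((hgc.const_sub (g 0)).div hid h0)

lemma re_dcQuotient_nonneg (hg : IsNegImagFun g S d) {s : ℂ} (hs : 0 < s.re) :
    0 ≤ (dcQuotient g s).re := by
  refine re_nonneg_of_eventually_neg_lt_re (fun z hz => ?_) hg.tendsto_dcQuotient_cobounded
    (fun c hc η hη => ?_) hs
  · exact hg.differentiableAt_dcQuotient (fun h => (hg.re_nonpos z h).not_gt hz)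
      (by rintro rfl; simp at hz)
  · obtain ⟨ω, rfl⟩ : ∃ ω : ℝ, c = I * ω := ⟨c.im, by apply Complex.ext <;> simp [hc]⟩
    obtain ⟨k, hk, hlim⟩ := hg.tendsto_mul_dcQuotient ω
    have hline : ∀ᶠ τ : ℝ in 𝓝[≠] 0, 0 ≤ (dcQuotient g (I * ω + I * τ)).re :=
      ((tendsto_add_I_mul_nhdsNE _).eventually
        (eventually_notMem_nhdsNE hg.finite_poles _)).mono fun τ hτ => by
          rw [← mul_add, ← ofReal_add] at hτ ⊢
          exact hg.re_dcQuotient_I_mul_nonneg hτ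
    have hd : ∀ᶠ z in 𝓝[≠] (I * ω), DifferentiableAt ℂ (dcQuotient g) z :=
      (eventually_notMem_nhdsNE (hg.finite_poles.insert 0) (I * ω)).mono fun z hz =>
        hg.differentiableAt_dcQuotient (fun h => hz (.inr h)) fun h => hz (.inl h)
    simpa only [hc] using eventually_neg_lt_re hk hd hlim hline hη

lemma limit_le_zero (hg : IsNegImagFun g S d) : d ≤ g 0 := by
  refine Complex.le_def.2 ⟨?_, hg.im_limit.trans hg.im_zero.symm⟩
  have hlim : Tendsto (fun x : ℝ => (g 0 - g x).re) atTop (𝓝 (g 0 - d).re) :=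
    (continuous_re.tendsto _).comp ((hg.tendsto_cobounded.comp
      (RCLike.tendsto_ofReal_atTop_cobounded ℂ)).const_sub (g 0))
  rw [← sub_nonneg, ← sub_re]
  refine ge_of_tendsto hlim ?_
  filter_upwards [eventually_gt_atTop 0] with x hx
  have hx0 : (x : ℂ) ≠ 0 := ofReal_ne_zero.2 hx.ne'
  rw [← mul_div_cancel₀ (g 0 - g x) hx0, re_ofReal_mul]
  exact mul_nonneg hx.le (hg.re_dcQuotient_nonneg (by simpa using hx))

end IsNegImagFun

end Scalar

section HermitianForm

variable {κ : Type*} [Fintype κ]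

/-- The form `u* N u`; the matrix `N` is not assumed Hermitian. -/
noncomputable def quad (N : Matrix κ κ ℂ) (u : κ → ℂ) : ℂ :=
  star u ⬝ᵥ N *ᵥ u

lemma quad_add (M N : Matrix κ κ ℂ) (u : κ → ℂ) : quad (M + N) u = quad M u + quad N u := by
  simp only [quad, add_mulVec, dotProduct_add]

lemma quad_sub (M N : Matrix κ κ ℂ) (u : κ → ℂ) : quad (M - N) u = quad M u - quad N u := by
  simp only [quad, sub_mulVec, dotProduct_sub]

lemma quad_smul (c : ℂ) (N : Matrix κ κ ℂ) (u : κ → ℂ) : quad (c • N) u = c * quad N u := by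
  simp only [quad, smul_mulVec, dotProduct_smul, smul_eq_mul]

lemma quad_conjTranspose (N : Matrix κ κ ℂ) (u : κ → ℂ) : quad Nᴴ u = star (quad N u) := by
  rw [quad, quad, star_dotProduct, star_mulVec, conjTranspose_conjTranspose, ← dotProduct_mulVec]

lemma im_star_dotProduct_comm (u y : κ → ℂ) : (star u ⬝ᵥ y).im = -(star y ⬝ᵥ u).im := by
  rw [star_dotProduct, Complex.star_def, Complex.conj_im]

lemma quad_transpose_star (N : Matrix κ κ ℂ) (u : κ → ℂ) : quad Nᵀ (star u) = quad N u := by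
  rw [quad, quad, star_star, mulVec_transpose, dotProduct_mulVec, dotProduct_comm]

lemma quad_I_smul_sub_conjTranspose (N : Matrix κ κ ℂ) (u : κ → ℂ) :
    quad (Complex.I • (N - Nᴴ)) u = ((-2 * (quad N u).im : ℝ) : ℂ) := by
  rw [quad_smul, quad_sub, quad_conjTranspose, Complex.star_def, Complex.sub_conj]
  push_cast
  linear_combination 2 * ((quad N u).im : ℂ) * Complex.I_mul_I

lemma continuous_quad (u : κ → ℂ) : Continuous fun N : Matrix κ κ ℂ => quad N u := by
  unfold quad
  fun_prop

lemma isHermitian_of_im_quad_eq_zero {N : Matrix κ κ ℂ} (h : ∀ u, (quad N u).im = 0) :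
    N.IsHermitian := by
  classical
  rw [← isSymmetric_toEuclideanLin_iff, LinearMap.isSymmetric_iff_inner_map_self_real]
  intro v
  have hinner : inner ℂ (N.toEuclideanLin v) v = star (quad N v.ofLp) := by
    rw [EuclideanSpace.inner_eq_star_dotProduct, quad, star_dotProduct, star_star]
    exact dotProduct_comm _ _
  rw [hinner, Complex.conj_eq_iff_im]
  simpa using h v.ofLp

lemma posSemidef_of_quad_nonneg {N : Matrix κ κ ℂ} (h : ∀ u, 0 ≤ quad N u) : N.PosSemidef :=
  .of_dotProduct_mulVec_nonneg
    (isHermitian_of_im_quad_eq_zero fun u => (Complex.le_def.1 (h u)).2.symm) h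

lemma im_eq_zero_of_mem_spectrum_isHermitian_mul_posSemidef [DecidableEq κ]
    {T P : Matrix κ κ ℂ} (hT : T.IsHermitian) (hP : P.PosSemidef) {μ : ℂ}
    (hμ : μ ∈ spectrum ℂ (T * P)) : μ.im = 0 := by
  obtain ⟨v, hv, hTP⟩ := mem_spectrum_iff_exists_mulVec_eq.1 hμ
  by_cases hPv : quad P v = 0
  · have hμv : μ • v = 0 := by
      rw [← hTP, ← mulVec_mulVec, (hP.dotProduct_mulVec_zero_iff v).1 hPv, mulVec_zero]
    rw [(smul_eq_zero.1 hμv).resolve_right hv, Complex.zero_im]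
  have hPTP : (P * T * P).IsHermitian := by
    simpa only [hP.1.eq] using isHermitian_mul_mul_conjTranspose P hT
  have hquad : quad (P * T * P) v = μ * quad P v := by
    rw [quad, Matrix.mul_assoc, ← mulVec_mulVec, hTP, mulVec_smul, dotProduct_smul, quad,
      smul_eq_mul]
  have hreal {N : Matrix κ κ ℂ} (hN : N.IsHermitian) : (starRingEnd ℂ) (quad N v) = quad N v :=
    (quad_conjTranspose N v).symm.trans (by rw [hN.eq])
  rw [eq_div_of_mul_eq hPv hquad.symm, ← Complex.conj_eq_iff_im, map_div₀, hreal hPTP, hreal hP.1]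

end HermitianForm

/-- A linear time-invariant system `x' = A x + B u`, `y = C x + D u` with complex coefficients,
state space indexed by `ι`, and inputs and outputs indexed by `κ`. -/
structure StateSpace (ι κ : Type*) where
  A : Matrix ι ι ℂ
  B : Matrix ι κ ℂ
  C : Matrix κ ι ℂ
  D : Matrix κ κ ℂ

namespace StateSpace

section Transfer

open Complex Bornology

variable {ι κ : Type*} [Fintype ι] [DecidableEq ι] [Fintype κ] (S : StateSpace ι κ)

/-- The transfer function `C (s - A)⁻¹ B + D`, with a junk value at the eigenvalues of `A`. -/
noncomputable def transfer (s : ℂ) : Matrix κ κ ℂ :=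
  S.C * (s • (1 : Matrix ι ι ℂ) - S.A)⁻¹ * S.B + S.D

variable {S}

/-- The input `u e^{st}`, state `x e^{st}` and output `y e^{st}` satisfy the equations of `S`. This
makes sense also when `s` is a pole of `S`. -/
structure IsResponse (S : StateSpace ι κ) (s : ℂ) (x : ι → ℂ) (u y : κ → ℂ) : Prop where
  state : s • x = S.A *ᵥ x + S.B *ᵥ u
  output : y = S.C *ᵥ x + S.D *ᵥ u

lemma isUnit_smul_one_sub {M : Matrix ι ι ℂ} {s : ℂ} (hs : s ∉ spectrum ℂ M) :
    IsUnit (s • (1 : Matrix ι ι ℂ) - M) := by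
  rwa [spectrum.notMem_iff, Algebra.algebraMap_eq_smul_one] at hs

lemma smul_one_sub_mulVec (M : Matrix ι ι ℂ) (s : ℂ) (x : ι → ℂ) :
    (s • (1 : Matrix ι ι ℂ) - M) *ᵥ x = s • x - M *ᵥ x := by
  rw [sub_mulVec, smul_mulVec, one_mulVec]

lemma inv_smul_one_sub_eq_resolvent (M : Matrix ι ι ℂ) (s : ℂ) :
    (s • (1 : Matrix ι ι ℂ) - M)⁻¹ = resolvent M s := by
  rw [resolvent, nonsing_inv_eq_ringInverse, Algebra.algebraMap_eq_smul_one]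

lemma IsResponse.state_eq {s : ℂ} {x : ι → ℂ} {u y : κ → ℂ} (h : S.IsResponse s x u y)
    (hs : s ∉ spectrum ℂ S.A) : x = (s • (1 : Matrix ι ι ℂ) - S.A)⁻¹ *ᵥ S.B *ᵥ u := by
  have hx : (s • (1 : Matrix ι ι ℂ) - S.A) *ᵥ x = S.B *ᵥ u := by
    rw [smul_one_sub_mulVec, h.state, add_sub_cancel_left]
  rw [← hx, mulVec_mulVec, nonsing_inv_mul _ ((isUnit_iff_isUnit_det _).1 (isUnit_smul_one_sub hs)),
    one_mulVec]

lemma IsResponse.output_eq {s : ℂ} {x : ι → ℂ} {u y : κ → ℂ} (h : S.IsResponse s x u y)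
    (hs : s ∉ spectrum ℂ S.A) : y = S.transfer s *ᵥ u := by
  rw [h.output, h.state_eq hs, transfer, add_mulVec, mulVec_mulVec, mulVec_mulVec, Matrix.mul_assoc]

lemma exists_isResponse {s : ℂ} (hs : s ∉ spectrum ℂ S.A) (u : κ → ℂ) :
    ∃ x, S.IsResponse s x u (S.transfer s *ᵥ u) := by
  refine ⟨(s • (1 : Matrix ι ι ℂ) - S.A)⁻¹ *ᵥ S.B *ᵥ u, ?_, ?_⟩
  · rw [← sub_eq_iff_eq_add', ← smul_one_sub_mulVec, mulVec_mulVec,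
      mul_nonsing_inv _ ((isUnit_iff_isUnit_det _).1 (isUnit_smul_one_sub hs)), one_mulVec]
  · rw [transfer, add_mulVec, mulVec_mulVec, mulVec_mulVec, Matrix.mul_assoc]

open scoped Matrix.Norms.Operator in
lemma differentiableAt_quad_transfer (S : StateSpace ι κ) {s : ℂ} (hs : s ∉ spectrum ℂ S.A)
    (u : κ → ℂ) :
    DifferentiableAt ℂ (fun s => quad (S.transfer s) u) s := by
  let L : Matrix ι ι ℂ →ₗ[ℂ] ℂ :=
    { toFun := fun X => quad (S.C * X * S.B) u
      map_add' := fun X Y => by rw [Matrix.mul_add, Matrix.add_mul, quad_add]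
      map_smul' := fun c X => by
        rw [Matrix.mul_smul, Matrix.smul_mul, quad_smul, RingHom.id_apply, smul_eq_mul] }
  have hres : DifferentiableAt ℂ (resolvent S.A) s :=
    (spectrum.hasDerivAt_resolvent_const_left (spectrum.notMem_iff.1 hs)).differentiableAt
  simp only [transfer, quad_add, inv_smul_one_sub_eq_resolvent]
  exact ((LinearMap.toContinuousLinearMap L).differentiableAt.comp s hres).add_const _

open scoped Matrix.Norms.Operator in
lemma tendsto_quad_transfer_cobounded (S : StateSpace ι κ) (u : κ → ℂ) :
    Tendsto (fun s => quad (S.transfer s) u) (cobounded ℂ) (𝓝 (quad S.D u)) := by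
  have hcont : Continuous fun X : Matrix ι ι ℂ => quad (S.C * X * S.B + S.D) u :=
    (continuous_quad u).comp (by fun_prop)
  have hlim := (hcont.tendsto 0).comp (spectrum.resolvent_tendsto_cobounded (𝕜 := ℂ) S.A)
  simpa only [Function.comp_def, ← inv_smul_one_sub_eq_resolvent, ← transfer.eq_def,
    Matrix.mul_zero, Matrix.zero_mul, zero_add] using hlim

end Transfer

end StateSpace

section RightInverse

variable {ι τ : Type*} [DecidableEq ι] [Fintype τ]

lemma exists_mul_eq_one_of_rank_eq_card [Fintype ι] {K : Type*} [Field K] {M : Matrix ι τ K}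
    (hM : M.rank = Fintype.card ι) : ∃ W : Matrix τ ι K, M * W = 1 := by
  have hrange : LinearMap.range M.mulVecLin = ⊤ := by
    apply Submodule.eq_top_of_finrank_eq
    rw [← Matrix.rank, hM, Module.finrank_fintype_fun_eq_card]
  exact mulVec_surjective_iff_exists_right_inverse.1 (LinearMap.range_eq_top.1 hrange)

lemma exists_tendsto_mulVec_eq_zero [Finite ι] {K X : Type*} [CommRing K]
    [TopologicalSpace K] [IsTopologicalRing K] [TopologicalSpace X] {M : X → Matrix ι τ K} {x₀ : X}
    (hM : ContinuousAt M x₀) {W : Matrix τ ι K} (hW : M x₀ * W = 1) {w : τ → K}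
    (hw : M x₀ *ᵥ w = 0) :
    ∃ f : X → τ → K, Tendsto f (𝓝 x₀) (𝓝 w) ∧ ∀ x, M x *ᵥ f x = 0 := by
  cases nonempty_fintype ι
  let f (x : X) : τ → K := (M x * W).det • w - W *ᵥ (M x * W).adjugate *ᵥ M x *ᵥ w
  have hf : ContinuousAt f x₀ := by
    have hMW : ContinuousAt (fun x => M x * W) x₀ := by fun_prop
    have hdet : ContinuousAt (fun x => (M x * W).det) x₀ :=
      continuous_id.matrix_det.continuousAt.comp hMW
    have hadj : ContinuousAt (fun x => (M x * W).adjugate) x₀ :=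
      continuous_id.matrix_adjugate.continuousAt.comp hMW
    fun_prop
  refine ⟨f, ?_, fun x => ?_⟩
  · have hfx₀ : f x₀ = w := by
      simp only [f, hW, hw, det_one, one_smul, mulVec_zero, sub_zero]
    simpa only [hfx₀] using hf.tendsto
  · simp only [f]
    rw [mulVec_sub, mulVec_smul, mulVec_mulVec, mulVec_mulVec, mul_adjugate, smul_mulVec,
      one_mulVec, sub_self]

end RightInverse

namespace StateSpace

section NegImag

open Complex

variable {ι κ : Type*} [Fintype ι] [Fintype κ]

/-- Popov–Belevitch–Hautus controllability of the mode `s`: no left eigenvector for the eigenvalue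
`s` is annihilated by `B`. -/
def ControllableAt (S : StateSpace ι κ) (s : ℂ) : Prop :=
  ∀ v, v ᵥ* S.A = s • v → v ᵥ* S.B = 0 → v = 0

/-- Popov–Belevitch–Hautus observability of the mode `s`: no eigenvector for the eigenvalue `s` is
annihilated by `C`. -/
def ObservableAt (S : StateSpace ι κ) (s : ℂ) : Prop :=
  ∀ x, S.A *ᵥ x = s • x → S.C *ᵥ x = 0 → x = 0

/-- The negative imaginary inequality, stated for the responses of `S` at imaginary frequencies so
that it also constrains the poles of `S` on the imaginary axis. -/
def NegImagResponse (S : StateSpace ι κ) : Prop :=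
  ∀ (ω : ℝ) (x u y), S.IsResponse (I * ω) x u y → ω * (star u ⬝ᵥ y).im ≤ 0

/-- The strict form of `NegImagResponse`, for nonzero frequencies and inputs. -/
def StrictNegImagResponse (S : StateSpace ι κ) : Prop :=
  ∀ (ω : ℝ) (x u y), S.IsResponse (I * ω) x u y → ω ≠ 0 → u ≠ 0 → ω * (star u ⬝ᵥ y).im < 0

lemma StrictNegImagResponse.negImagResponse {S : StateSpace ι κ} (hS : S.StrictNegImagResponse) :
    S.NegImagResponse := by
  intro ω x u y h
  rcases eq_or_ne ω 0 with rfl | hω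
  · rw [zero_mul]
  rcases eq_or_ne u 0 with rfl | hu
  · simp only [star_zero, zero_dotProduct, zero_im, mul_zero, le_refl]
  · exact (hS ω x u y h hω hu).le

lemma ControllableAt.exists_right_inverse [DecidableEq ι] {S : StateSpace ι κ} {s : ℂ}
    (h : S.ControllableAt s) :
    ∃ W : Matrix (ι ⊕ κ) ι ℂ, fromCols (s • (1 : Matrix ι ι ℂ) - S.A) S.B * W = 1 := by
  refine exists_mul_eq_one_of_rank_eq_card (LinearIndependent.rank_matrix ?_)
  rw [← vecMul_injective_iff, ← coe_vecMulLinear, injective_iff_map_eq_zero]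
  intro v hv
  rw [vecMulLinear_apply, vecMul_fromCols, ← Sum.elim_zero_zero, Sum.elim_eq_iff] at hv
  refine h v ?_ hv.2
  rw [eq_comm, ← sub_eq_zero, ← hv.1, vecMul_sub, vecMul_smul, vecMul_one]

lemma ControllableAt.exists_tendsto_isResponse {S : StateSpace ι κ} {s : ℂ}
    (h : S.ControllableAt s) {x : ι → ℂ} {u y : κ → ℂ} (hr : S.IsResponse s x u y) :
    ∃ (x' : ℂ → ι → ℂ) (u' y' : ℂ → κ → ℂ), (∀ z, S.IsResponse z (x' z) (u' z) (y' z)) ∧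
      Tendsto u' (𝓝 s) (𝓝 u) ∧ Tendsto y' (𝓝 s) (𝓝 y) := by
  classical
  obtain ⟨W, hW⟩ := h.exists_right_inverse
  have hcont : Continuous fun z : ℂ => fromCols (z • (1 : Matrix ι ι ℂ) - S.A) S.B := by
    refine continuous_matrix fun i j => ?_
    cases j <;> simp only [fromCols_apply_inl, fromCols_apply_inr] <;> fun_prop
  have hw : fromCols (s • (1 : Matrix ι ι ℂ) - S.A) S.B *ᵥ Sum.elim x (-u) = 0 := by
    rw [fromCols_mulVec_sumElim, smul_one_sub_mulVec, hr.state, mulVec_neg]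
    abel
  obtain ⟨f, hf, hker⟩ := exists_tendsto_mulVec_eq_zero hcont.continuousAt hW hw
  have hu : Continuous fun g : ι ⊕ κ → ℂ => -(g ∘ Sum.inr) := by fun_prop
  have hy : Continuous fun g : ι ⊕ κ → ℂ => S.C *ᵥ (g ∘ Sum.inl) + S.D *ᵥ -(g ∘ Sum.inr) := by
    fun_prop
  refine ⟨fun z => f z ∘ Sum.inl, fun z => -(f z ∘ Sum.inr),
    fun z => S.C *ᵥ (f z ∘ Sum.inl) + S.D *ᵥ -(f z ∘ Sum.inr), fun z => ⟨?_, rfl⟩,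
    (hu.tendsto' _ _ ?_).comp hf, (hy.tendsto' _ _ ?_).comp hf⟩
  · have hz := hker z
    rw [fromCols_mulVec, smul_one_sub_mulVec] at hz
    rw [← sub_eq_zero, ← hz, mulVec_neg]
    abel
  · rw [Sum.elim_comp_inr, neg_neg]
  · rw [Sum.elim_comp_inl, Sum.elim_comp_inr, neg_neg, hr.output]

variable [DecidableEq ι]

/-- The negative imaginary property of the transfer function, in terms of its scalar compressions
`u* R(s) u`. -/
def NegImagTransfer (S : StateSpace ι κ) : Prop :=
  ∀ u, IsNegImagFun (fun s => quad (S.transfer s) u) (spectrum ℂ S.A) (quad S.D u)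

variable {S : StateSpace ι κ}

lemma NegImagResponse.negImagTransfer (hS : S.NegImagResponse) (hA : Stable S.A) :
    S.NegImagTransfer := fun u => by
  have haxis (ω : ℝ) : I * (ω : ℂ) ∉ spectrum ℂ S.A := hA.notMem_spectrum (by simp)
  exact
    { finite_poles := S.A.finite_spectrum
      zero_notMem := hA.notMem_spectrum le_rfl
      re_nonpos := fun s hs => (hA s hs).le
      differentiableAt := fun s hs => S.differentiableAt_quad_transfer hs u
      tendsto_cobounded := S.tendsto_quad_transfer_cobounded u
      mul_im_nonpos := fun ω hω =>
        let ⟨x, hx⟩ := exists_isResponse hω u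
        hS ω x u _ hx
      tendsto_pole := fun ω hω => absurd hω (haxis ω) }

namespace NegImagTransfer

lemma zero_notMem (hS : S.NegImagTransfer) : 0 ∉ spectrum ℂ S.A :=
  (hS 0).zero_notMem

lemma isHermitian_D (hS : S.NegImagTransfer) : S.D.IsHermitian :=
  isHermitian_of_im_quad_eq_zero fun u => (hS u).im_limit

lemma isHermitian_transfer_zero (hS : S.NegImagTransfer) : (S.transfer 0).IsHermitian :=
  isHermitian_of_im_quad_eq_zero fun u => (hS u).im_zero

lemma posSemidef_transfer_zero_sub_D (hS : S.NegImagTransfer) : (S.transfer 0 - S.D).PosSemidef :=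
  posSemidef_of_quad_nonneg fun u => by
    rw [quad_sub, sub_nonneg]
    exact (hS u).limit_le_zero

end NegImagTransfer

/-- At a pole the inequality follows by continuity: controllability makes every response at `iω` a
limit of responses at nearby frequencies. -/
lemma NegImagTransfer.negImagResponse (hS : S.NegImagTransfer)
    (hctrl : ∀ ω : ℝ, S.ControllableAt (I * ω)) : S.NegImagResponse := by
  intro ω x u y hr
  obtain ⟨x', u', y', hr', hu, hy⟩ := (hctrl ω).exists_tendsto_isResponse hr
  have hpath : Tendsto (fun τ : ℝ => I * ω + I * (τ : ℂ)) (𝓝[≠] 0) (𝓝[≠] (I * ω)) :=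
    tendsto_add_I_mul_nhdsNE _
  have hlim : Tendsto (fun τ : ℝ => (ω + τ) *
      (star (u' (I * ω + I * τ)) ⬝ᵥ y' (I * ω + I * τ)).im) (𝓝[≠] 0)
      (𝓝 ((ω + 0) * (star u ⬝ᵥ y).im)) := by
    refine ((tendsto_id.mono_left nhdsWithin_le_nhds).const_add ω).mul
      ((continuous_im.tendsto _).comp ?_)
    have hpair : Continuous fun p : (κ → ℂ) × (κ → ℂ) => star p.1 ⬝ᵥ p.2 := by fun_prop
    exact (hpair.tendsto _).comp
      ((hu.prodMk_nhds hy).comp (hpath.mono_right nhdsWithin_le_nhds))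
  rw [add_zero] at hlim
  refine le_of_tendsto hlim ?_
  filter_upwards [hpath.eventually (eventually_notMem_nhdsNE S.A.finite_spectrum _)] with τ hτ
  rw [(hr' _).output_eq hτ]
  rw [← mul_add, ← ofReal_add] at hτ ⊢
  exact (hS _).mul_im_nonpos (ω + τ) hτ

end NegImag

section Shift

open Complex

variable {ι κ : Type*}

/-- The system with output multiplied by `θ`. -/
def scale (S : StateSpace ι κ) (θ : ℝ) : StateSpace ι κ :=
  ⟨S.A, S.B, (θ : ℂ) • S.C, (θ : ℂ) • S.D⟩

lemma scale_one (S : StateSpace ι κ) : S.scale 1 = S := by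
  simp only [scale, ofReal_one, one_smul]

variable [Fintype ι]

lemma NegImagResponse.scale [Fintype κ] {S : StateSpace ι κ} (hS : S.NegImagResponse) {θ : ℝ}
    (hθ : 0 ≤ θ) : (S.scale θ).NegImagResponse := by
  intro ω x u y h
  have hy : y = (θ : ℂ) • (S.C *ᵥ x + S.D *ᵥ u) := by
    rw [h.output, StateSpace.scale, smul_mulVec, smul_mulVec, smul_add]
  rw [hy, dotProduct_smul, smul_eq_mul, im_ofReal_mul, mul_left_comm]
  exact mul_nonpos_of_nonneg_of_nonpos hθ (hS ω x u _ ⟨h.state, rfl⟩)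

variable [DecidableEq ι]

lemma transfer_scale (S : StateSpace ι κ) (θ : ℝ) (s : ℂ) :
    (S.scale θ).transfer s = (θ : ℂ) • S.transfer s := by
  simp only [transfer, scale, Matrix.smul_mul, smul_add]

/-- The spectrum of `A` is moved to the left by `ε`, and `C` is corrected so that the value of the
transfer function at `0` does not change. -/
noncomputable def shift (S : StateSpace ι κ) (ε : ℝ) : StateSpace ι κ :=
  ⟨S.A - (ε : ℂ) • 1, S.B, S.C - (ε : ℂ) • (S.C * S.A⁻¹), S.D⟩

variable {S : StateSpace ι κ}

lemma shift_zero (S : StateSpace ι κ) : S.shift 0 = S := by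
  simp only [shift, ofReal_zero, zero_smul, sub_zero]

lemma stable_shift (hA : ∀ μ ∈ spectrum ℂ S.A, μ.re ≤ 0) {ε : ℝ} (hε : 0 < ε) :
    Stable (S.shift ε).A := by
  intro μ hμ
  rw [shift, ← Algebra.algebraMap_eq_smul_one, ← spectrum.sub_singleton_eq] at hμ
  obtain ⟨ν, hν, _, rfl, rfl⟩ := hμ
  rw [sub_re, ofReal_re]
  linarith [hA ν hν]

lemma transfer_zero (h0 : 0 ∉ spectrum ℂ S.A) : S.transfer 0 = S.D - S.C * S.A⁻¹ * S.B := by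
  have hdet : IsUnit S.A.det := (isUnit_iff_isUnit_det _).1 ((spectrum.zero_notMem_iff ℂ).1 h0)
  have hneg : (-S.A)⁻¹ = -S.A⁻¹ :=
    inv_eq_right_inv (by rw [neg_mul_neg, mul_nonsing_inv _ hdet])
  rw [transfer, zero_smul, zero_sub, hneg, Matrix.mul_neg, Matrix.neg_mul, neg_add_eq_sub]

lemma IsResponse.smul_output_shift [Fintype κ] {ε : ℝ} {s : ℂ} {x : ι → ℂ} {u y : κ → ℂ}
    (h : (S.shift ε).IsResponse s x u y) (h0 : 0 ∉ spectrum ℂ S.A) (hs : s + ε ∉ spectrum ℂ S.A) :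
    (s + ε) • y = s • S.transfer (s + ε) *ᵥ u + (ε : ℂ) • S.transfer 0 *ᵥ u := by
  have hS : S.IsResponse (s + ε) x u (S.C *ᵥ x + S.D *ᵥ u) := by
    refine ⟨?_, rfl⟩
    rw [add_smul, h.state, shift, sub_mulVec, smul_mulVec, one_mulVec]
    abel
  have hinv : (s + ε) • S.A⁻¹ *ᵥ x = x + S.A⁻¹ *ᵥ S.B *ᵥ u := by
    rw [← mulVec_smul, hS.state, mulVec_add, mulVec_mulVec, nonsing_inv_mul, one_mulVec]
    exact (isUnit_iff_isUnit_det _).1 ((spectrum.zero_notMem_iff ℂ).1 h0)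
  have hy : y = S.transfer (s + ε) *ᵥ u - (ε : ℂ) • S.C *ᵥ S.A⁻¹ *ᵥ x := by
    rw [← hS.output_eq hs, h.output, shift, sub_mulVec, smul_mulVec, mulVec_mulVec]
    abel
  have hC : (s + ε) • S.C *ᵥ S.A⁻¹ *ᵥ x = S.transfer (s + ε) *ᵥ u - S.transfer 0 *ᵥ u := by
    rw [← mulVec_smul, hinv, ← hS.output_eq hs, transfer_zero h0, mulVec_add, sub_mulVec,
      ← mulVec_mulVec, ← mulVec_mulVec]
    abel
  rw [hy, smul_sub, smul_comm, hC, add_smul, smul_sub]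
  abel

lemma NegImagTransfer.negImagResponse_shift [Fintype κ] (hS : S.NegImagTransfer) {ε : ℝ}
    (hε : 0 < ε) : (S.shift ε).NegImagResponse := by
  intro ω x u y h
  set g : ℂ → ℂ := fun s => quad (S.transfer s) u
  set z : ℂ := I * ω + ε
  have hre : 0 < z.re := by simpa [z] using hε
  have hz : z ≠ 0 := fun h0 => by simp [h0] at hre
  have hzA : z ∉ spectrum ℂ S.A := fun hmem => ((hS 0).re_nonpos z hmem).not_gt hre
  have hy : star u ⬝ᵥ y = g 0 - I * ω * dcQuotient g z := by
    have := congrArg (star u ⬝ᵥ ·) (h.smul_output_shift hS.zero_notMem hzA)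
    simp only [dotProduct_smul, dotProduct_add, smul_eq_mul] at this
    rw [dcQuotient]
    refine mul_left_cancel₀ hz (this.trans ?_)
    field_simp
    simp only [g, z, quad]
    ring
  have him : (star u ⬝ᵥ y).im = -(ω * (dcQuotient g z).re) := by
    rw [hy, sub_im, (hS u).im_zero, zero_sub, mul_right_comm, mul_comm, im_ofReal_mul]
    simp
  rw [him, mul_neg, ← mul_assoc, neg_nonpos]
  exact mul_nonneg (mul_self_nonneg ω) ((hS u).re_dcQuotient_nonneg hre)

lemma transfer_zero_shift [Finite κ] (hA : ∀ μ ∈ spectrum ℂ S.A, μ.re ≤ 0)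
    (h0 : 0 ∉ spectrum ℂ S.A) {ε : ℝ} (hε : 0 < ε) : (S.shift ε).transfer 0 = S.transfer 0 := by
  classical
  cases nonempty_fintype κ
  refine Matrix.ext_of_mulVec_single fun j => ?_
  obtain ⟨x, hx⟩ :=
    exists_isResponse ((stable_shift hA hε).notMem_spectrum zero_re.ge) (Pi.single j 1)
  have h := hx.smul_output_shift h0 fun hmem => (hA _ hmem).not_gt (by simpa using hε)
  rw [zero_add, zero_smul, zero_add] at h
  exact smul_right_injective _ (ofReal_ne_zero.2 hε.ne') h

end Shift

section Feedback

open Complex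

variable {ι ι' κ : Type*} [Fintype ι] [Fintype ι'] [Fintype κ]

/-- The positive feedback interconnection of `S` and `T`: the output `y` of `S` plus the external
input is fed to `T`, whose output is the input of `S` and the output of the interconnection. The
formulas are those for `S.D * T.D = 0 = T.D * S.D`. -/
def feedback (S : StateSpace ι κ) (T : StateSpace ι' κ) : StateSpace (ι ⊕ ι') κ where
  A := fromBlocks (S.A + S.B * T.D * S.C) (S.B * T.C) (T.B * S.C) (T.A + T.B * S.D * T.C)
  B := fromRows (S.B * T.D) T.B
  C := fromCols (T.D * S.C) T.C
  D := T.D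

variable {S : StateSpace ι κ} {T : StateSpace ι' κ}

lemma isResponse_feedback_iff (hST : S.D * T.D = 0) (hTS : T.D * S.D = 0) {s : ℂ} {x : ι → ℂ}
    {x' : ι' → ℂ} {u v : κ → ℂ} :
    (S.feedback T).IsResponse s (Sum.elim x x') v u ↔
      ∃ y, S.IsResponse s x u y ∧ T.IsResponse s x' (y + v) u := by
  have hTy (w : κ → ℂ) : T.D *ᵥ S.D *ᵥ w = 0 := by rw [mulVec_mulVec, hTS, zero_mulVec]
  have hSy (w : κ → ℂ) : S.D *ᵥ T.D *ᵥ w = 0 := by rw [mulVec_mulVec, hST, zero_mulVec]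
  have hstate : s • Sum.elim x x' =
      (S.feedback T).A *ᵥ Sum.elim x x' + (S.feedback T).B *ᵥ v ↔
      s • x = S.A *ᵥ x + S.B *ᵥ (T.C *ᵥ x' + T.D *ᵥ (S.C *ᵥ x + v)) ∧
      s • x' = T.A *ᵥ x' + T.B *ᵥ (S.C *ᵥ x + S.D *ᵥ T.C *ᵥ x' + v) := by
    have hsmul : s • Sum.elim x x' = Sum.elim (s • x) (s • x') := by ext (i | i) <;> rfl
    simp only [hsmul, feedback, fromBlocks_mulVec, fromRows_mulVec, Sum.elim_comp_inl,
      Sum.elim_comp_inr, ← Sum.elim_add_add, Sum.elim_eq_iff, add_mulVec, mulVec_add,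
      ← mulVec_mulVec]
    refine and_congr (Eq.congr_right ?_) (Eq.congr_right ?_) <;> abel
  have houtput : u = (S.feedback T).C *ᵥ Sum.elim x x' + (S.feedback T).D *ᵥ v ↔
      u = T.C *ᵥ x' + T.D *ᵥ (S.C *ᵥ x + v) := by
    simp only [feedback, fromCols_mulVec_sumElim, mulVec_add, ← mulVec_mulVec]
    refine Eq.congr_right ?_
    abel
  constructor
  · rintro ⟨hx, hu⟩
    rw [hstate] at hx
    rw [houtput] at hu
    have hDu : S.D *ᵥ u = S.D *ᵥ T.C *ᵥ x' := by rw [hu, mulVec_add, hSy, add_zero]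
    refine ⟨S.C *ᵥ x + S.D *ᵥ u, ⟨by rw [hx.1, ← hu], rfl⟩, ⟨by rw [hx.2, hDu], ?_⟩⟩
    rw [add_right_comm, mulVec_add, hTy, add_zero, hu]
  · rintro ⟨y, ⟨hx, rfl⟩, hx', hu⟩
    have hu' : u = T.C *ᵥ x' + T.D *ᵥ (S.C *ᵥ x + v) := by
      rw [add_right_comm, mulVec_add T.D, hTy, add_zero] at hu
      exact hu
    have hDu : S.D *ᵥ u = S.D *ᵥ T.C *ᵥ x' := by rw [hu', mulVec_add, hSy, add_zero]
    exact ⟨hstate.2 ⟨by rw [hx, ← hu'], by rw [hx', hDu]⟩, houtput.2 hu'⟩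

lemma isResponse_zero_of_mulVec_eq {s : ℂ} {x : ι → ℂ} (hx : S.A *ᵥ x = s • x) :
    S.IsResponse s x 0 (S.C *ᵥ x) :=
  ⟨by rw [mulVec_zero, add_zero, hx], by rw [mulVec_zero, add_zero]⟩

lemma NegImagResponse.feedback (hS : S.NegImagResponse) (hT : T.NegImagResponse)
    (hST : S.D * T.D = 0) (hTS : T.D * S.D = 0) : (S.feedback T).NegImagResponse := by
  intro ω z v u h
  rw [← Sum.elim_comp_inl_inr z, isResponse_feedback_iff hST hTS] at h
  obtain ⟨y, hSr, hTr⟩ := h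
  have hpower : (star v ⬝ᵥ u).im = (star u ⬝ᵥ y).im + (star (y + v) ⬝ᵥ u).im := by
    rw [star_add, add_dotProduct, add_im, im_star_dotProduct_comm u, neg_add_cancel_left]
  rw [hpower, mul_add]
  exact add_nonpos (hS ω _ u y hSr) (hT ω _ _ u hTr)

variable [DecidableEq ι] [DecidableEq ι']

lemma I_mul_notMem_spectrum_feedback (hS : S.NegImagResponse) (hT : T.StrictNegImagResponse)
    (hST : S.D * T.D = 0) (hTS : T.D * S.D = 0) {ω : ℝ} (hω : ω ≠ 0)
    (hobs : S.ObservableAt (I * ω)) (hTA : I * (ω : ℂ) ∉ spectrum ℂ T.A) :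
    I * (ω : ℂ) ∉ spectrum ℂ (S.feedback T).A := by
  rw [mem_spectrum_iff_exists_mulVec_eq]
  rintro ⟨z, hz, hFz⟩
  have h := isResponse_zero_of_mulVec_eq hFz
  set u := (S.feedback T).C *ᵥ z
  rw [← Sum.elim_comp_inl_inr z, isResponse_feedback_iff hST hTS] at h
  obtain ⟨y, hSr, hTr⟩ := h
  rw [add_zero] at hTr
  have hy : y = 0 := by
    by_contra hy
    have hS' := hS ω _ u y hSr
    have hT' := hT ω _ y u hTr hω hy
    rw [im_star_dotProduct_comm] at hS'
    linarith
  subst hy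
  have hx' : z ∘ Sum.inr = 0 := by
    rw [hTr.state_eq hTA, mulVec_zero, mulVec_zero]
  have hu : u = 0 := by rw [hTr.output_eq hTA, mulVec_zero]
  rw [hu] at hSr
  have hx : z ∘ Sum.inl = 0 := by
    refine hobs _ ?_ ?_
    · rw [hSr.state, mulVec_zero, add_zero]
    · simpa only [mulVec_zero, add_zero] using hSr.output.symm
  exact hz (by rw [← Sum.elim_comp_inl_inr z, hx, hx', Sum.elim_zero_zero])

lemma zero_mem_spectrum_feedback_iff [DecidableEq κ] (hST : S.D * T.D = 0) (hTS : T.D * S.D = 0)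
    (hSA : 0 ∉ spectrum ℂ S.A) (hTA : 0 ∉ spectrum ℂ T.A) :
    0 ∈ spectrum ℂ (S.feedback T).A ↔ 1 ∈ spectrum ℂ (S.transfer 0 * T.transfer 0) := by
  simp only [mem_spectrum_iff_exists_mulVec_eq, one_smul, ← mulVec_mulVec]
  constructor
  · rintro ⟨z, hz, hFz⟩
    have h := isResponse_zero_of_mulVec_eq hFz
    set u := (S.feedback T).C *ᵥ z
    rw [← Sum.elim_comp_inl_inr z, isResponse_feedback_iff hST hTS] at h
    obtain ⟨y, hSr, hTr⟩ := h
    rw [add_zero] at hTr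
    have hy : y = S.transfer 0 *ᵥ u := hSr.output_eq hSA
    have hu : u = T.transfer 0 *ᵥ y := hTr.output_eq hTA
    refine ⟨y, ?_, by rw [← hu, ← hy]⟩
    rintro rfl
    rw [mulVec_zero] at hu
    have hx : z ∘ Sum.inl = 0 := by rw [hSr.state_eq hSA, hu, mulVec_zero, mulVec_zero]
    have hx' : z ∘ Sum.inr = 0 := by rw [hTr.state_eq hTA, mulVec_zero, mulVec_zero]
    exact hz (by rw [← Sum.elim_comp_inl_inr z, hx, hx', Sum.elim_zero_zero])
  · rintro ⟨y, hy, hyeq⟩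
    obtain ⟨x', hTr⟩ := exists_isResponse hTA y
    obtain ⟨x, hSr⟩ := exists_isResponse hSA (T.transfer 0 *ᵥ y)
    rw [hyeq] at hSr
    have hF := (isResponse_feedback_iff hST hTS).2 ⟨y, hSr, by rwa [add_zero]⟩
    refine ⟨Sum.elim x x', fun h0 => hy ?_, ?_⟩
    · rw [← hyeq, hF.output, h0, mulVec_zero, mulVec_zero, add_zero, mulVec_zero]
    · rw [hF.state, mulVec_zero, add_zero]

lemma transfer_feedback_mulVec (hST : S.D * T.D = 0) (hTS : T.D * S.D = 0) {s : ℂ}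
    (hSA : s ∉ spectrum ℂ S.A) (hTA : s ∉ spectrum ℂ T.A) (hF : s ∉ spectrum ℂ (S.feedback T).A)
    (w : κ → ℂ) :
    (S.feedback T).transfer s *ᵥ (w - S.transfer s *ᵥ T.transfer s *ᵥ w) = T.transfer s *ᵥ w := by
  obtain ⟨x', hTr⟩ := exists_isResponse hTA w
  obtain ⟨x, hSr⟩ := exists_isResponse hSA (T.transfer s *ᵥ w)
  have hTr' : T.IsResponse s x' (S.transfer s *ᵥ T.transfer s *ᵥ w +
      (w - S.transfer s *ᵥ T.transfer s *ᵥ w)) (T.transfer s *ᵥ w) := by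
    rwa [add_sub_cancel]
  exact (((isResponse_feedback_iff hST hTS).2 ⟨_, hSr, hTr'⟩).output_eq hF).symm

end Feedback

section Stability

open Complex

variable {ι ι' κ : Type*} [Fintype ι] [DecidableEq ι] {S : StateSpace ι κ} {T : StateSpace ι' κ}

lemma observableAt_of_stable (hA : Stable S.A) {s : ℂ} (hs : 0 ≤ s.re) : S.ObservableAt s := by
  intro x hx _
  by_contra hx0
  exact hA.notMem_spectrum hs (mem_spectrum_iff_exists_mulVec_eq.2 ⟨x, hx0, hx⟩)

/-- The path of systems along which a stable system with zero output, at `t = 0`, is deformed into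
`S`, at `t = 1`. -/
noncomputable def deform (S : StateSpace ι κ) (t : ℝ) : StateSpace ι κ :=
  (S.shift (1 - t)).scale t

lemma deform_one (S : StateSpace ι κ) : S.deform 1 = S := by
  rw [deform, sub_self, shift_zero, scale_one]

variable [Fintype κ]

lemma continuous_feedback_deform (S : StateSpace ι κ) (T : StateSpace ι' κ) :
    Continuous fun t => ((S.deform t).feedback T).A := by
  simp only [deform, feedback, scale, shift]
  exact .matrix_fromBlocks (by fun_prop) (by fun_prop) (by fun_prop) (by fun_prop)

namespace NegImagTransfer

variable [Fintype ι'] [DecidableEq ι']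

lemma stable_deform (hS : S.NegImagTransfer) {t : ℝ} (ht : t < 1) : Stable (S.deform t).A :=
  stable_shift (hS 0).re_nonpos (sub_pos.2 ht)

lemma stable_feedback_deform_zero (hS : S.NegImagTransfer) (hT : Stable T.A) :
    Stable ((S.deform 0).feedback T).A := by
  have h := (hS.stable_deform zero_lt_one).fromBlocks_zero₂₁ hT ((S.deform 0).B * T.C)
  simpa only [deform, scale, feedback, ofReal_zero, zero_smul, Matrix.mul_zero, Matrix.zero_mul,
    add_zero] using h

lemma negImagResponse_deform (hS : S.NegImagTransfer) (hctrl : ∀ ω : ℝ, S.ControllableAt (I * ω))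
    {t : ℝ} (ht : t ∈ Set.Icc (0 : ℝ) 1) : (S.deform t).NegImagResponse := by
  rcases ht.2.eq_or_lt with rfl | ht1
  · rw [deform_one]
    exact hS.negImagResponse hctrl
  · exact (hS.negImagResponse_shift (sub_pos.2 ht1)).scale ht.1

lemma observableAt_deform (hS : S.NegImagTransfer) {ω : ℝ} (hobs : S.ObservableAt (I * ω)) {t : ℝ}
    (ht : t ≤ 1) : (S.deform t).ObservableAt (I * ω) := by
  rcases ht.eq_or_lt with rfl | ht1
  · rwa [deform_one]
  · exact observableAt_of_stable (hS.stable_deform ht1) (by simp)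

lemma zero_notMem_spectrum_deform (hS : S.NegImagTransfer) {t : ℝ} (ht : t ≤ 1) :
    0 ∉ spectrum ℂ (S.deform t).A := by
  rcases ht.eq_or_lt with rfl | ht1
  · rw [deform_one]
    exact hS.zero_notMem
  · exact (hS.stable_deform ht1).notMem_spectrum zero_re.ge

lemma posSemidef_transfer_zero (hS : S.NegImagTransfer) (hD : S.D.PosSemidef) :
    (S.transfer 0).PosSemidef := by
  simpa only [sub_add_cancel] using hS.posSemidef_transfer_zero_sub_D.add hD

lemma transfer_zero_deform (hS : S.NegImagTransfer) {t : ℝ} (ht : t ≤ 1) :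
    (S.deform t).transfer 0 = (t : ℂ) • S.transfer 0 := by
  rw [deform, transfer_scale]
  rcases ht.eq_or_lt with rfl | ht1
  · rw [sub_self, shift_zero]
  · rw [transfer_zero_shift (hS 0).re_nonpos hS.zero_notMem (sub_pos.2 ht1)]

lemma im_eq_zero_of_mem_spectrum_transfer_zero_mul [DecidableEq κ] (hS : S.NegImagTransfer)
    (hT : T.NegImagTransfer) (hTD : T.D.PosSemidef) {μ : ℂ}
    (hμ : μ ∈ spectrum ℂ (S.transfer 0 * T.transfer 0)) : μ.im = 0 :=
  im_eq_zero_of_mem_spectrum_isHermitian_mul_posSemidef hS.isHermitian_transfer_zero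
    (hT.posSemidef_transfer_zero hTD) hμ

lemma D_mul_D_eq_zero (hS : S.NegImagTransfer) (hT : T.NegImagTransfer) (hST : S.D * T.D = 0) :
    T.D * S.D = 0 := by
  rw [← hT.isHermitian_D, ← hS.isHermitian_D, ← conjTranspose_mul, hST, conjTranspose_zero]

variable [DecidableEq κ]

/-- An imaginary eigenvalue along the path is `0`, because strictness of `T` excludes the others,
and at the parameter `t` the eigenvalue `0` makes `1 / t ≥ 1` an eigenvalue of the dc loop gain. -/
lemma stable_feedback (hS : S.NegImagTransfer) (hctrl : ∀ ω : ℝ, S.ControllableAt (I * ω))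
    (hobs : ∀ ω : ℝ, S.ObservableAt (I * ω)) (hTA : Stable T.A) (hT : T.StrictNegImagResponse)
    (hST : S.D * T.D = 0) (h : ∀ μ ∈ spectrum ℂ (S.transfer 0 * T.transfer 0), μ.re < 1) :
    Stable (S.feedback T).A := by
  have hTS : T.D * S.D = 0 :=
    hS.D_mul_D_eq_zero (hT.negImagResponse.negImagTransfer hTA) hST
  rw [← S.deform_one]
  refine Stable.of_path (S.continuous_feedback_deform T) (hS.stable_feedback_deform_zero hTA) ?_
  intro t ht μ hμ hre
  have hST' : (S.deform t).D * T.D = 0 := by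
    simp only [deform, scale, shift, Matrix.smul_mul, hST, smul_zero]
  have hTS' : T.D * (S.deform t).D = 0 := by
    simp only [deform, scale, shift, Matrix.mul_smul, hTS, smul_zero]
  obtain ⟨ω, rfl⟩ : ∃ ω : ℝ, μ = I * ω := ⟨μ.im, by apply Complex.ext <;> simp [hre]⟩
  have hω : ω = 0 := by
    by_contra hω
    exact I_mul_notMem_spectrum_feedback (hS.negImagResponse_deform hctrl ht) hT hST' hTS' hω
      (hS.observableAt_deform (hobs ω) ht.2) (hTA.notMem_spectrum (by simp)) hμ
  rw [hω, ofReal_zero, mul_zero, zero_mem_spectrum_feedback_iff hST' hTS'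
    (hS.zero_notMem_spectrum_deform ht.2) (hTA.notMem_spectrum zero_re.ge),
    hS.transfer_zero_deform ht.2, mem_spectrum_iff_exists_mulVec_eq] at hμ
  obtain ⟨v, hv, htv⟩ := hμ
  rw [Matrix.smul_mul, smul_mulVec, one_smul] at htv
  have ht0 : (t : ℂ) ≠ 0 := fun h0 => hv (by rw [← htv, h0, zero_smul])
  have hmem : ((t⁻¹ : ℝ) : ℂ) ∈ spectrum ℂ (S.transfer 0 * T.transfer 0) := by
    refine mem_spectrum_iff_exists_mulVec_eq.2 ⟨v, hv, ?_⟩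
    rw [ofReal_inv, eq_inv_smul_iff₀ ht0, htv]
  exact (h _ hmem).not_ge
    ((one_le_inv₀ (ht.1.lt_of_ne' (ofReal_ne_zero.1 ht0))).2 ht.2)

/-- If `R(0) Rₛ(0) w = μ w`, then the constant external input `(1 - μ) w` produces the output
`Rₛ(0) w`, and the dc gain of the closed loop is positive semidefinite. -/
lemma re_lt_one_of_stable_feedback (hS : S.NegImagTransfer) (hSR : S.NegImagResponse)
    (hTA : Stable T.A) (hT : T.NegImagResponse) (hTD : T.D.PosSemidef) (hST : S.D * T.D = 0)
    (hF : Stable (S.feedback T).A) {μ : ℂ}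
    (hμ : μ ∈ spectrum ℂ (S.transfer 0 * T.transfer 0)) : μ.re < 1 := by
  have hTT := hT.negImagTransfer hTA
  have hTS := hS.D_mul_D_eq_zero hTT hST
  have hT0 := hTT.posSemidef_transfer_zero hTD
  have hF0 : ((S.feedback T).transfer 0).PosSemidef :=
    ((hSR.feedback hT hST hTS).negImagTransfer hF).posSemidef_transfer_zero hTD
  obtain ⟨r, rfl⟩ : ∃ r : ℝ, μ = r :=
    ⟨μ.re, (conj_eq_iff_re.1 (conj_eq_iff_im.2
      (hS.im_eq_zero_of_mem_spectrum_transfer_zero_mul hTT hTD hμ))).symm⟩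
  obtain ⟨w, hw, hrw⟩ := mem_spectrum_iff_exists_mulVec_eq.1 hμ
  rw [← mulVec_mulVec] at hrw
  have hFw : (S.feedback T).transfer 0 *ᵥ (((1 - r : ℝ) : ℂ) • w) = T.transfer 0 *ᵥ w := by
    rw [ofReal_sub, ofReal_one, sub_smul, one_smul, ← hrw]
    exact transfer_feedback_mulVec hST hTS hS.zero_notMem hTT.zero_notMem
      (hF.notMem_spectrum zero_re.ge) w
  rw [ofReal_re]
  by_contra! hr
  have hTw : T.transfer 0 *ᵥ w = 0 := by
    rcases hr.eq_or_lt with rfl | hr1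
    · rw [← hFw, sub_self, ofReal_zero, zero_smul, mulVec_zero]
    have hr1' : ((1 - r : ℝ) : ℂ) < 0 := by exact_mod_cast sub_neg.2 hr1
    have hnonneg := hF0.dotProduct_mulVec_nonneg (((1 - r : ℝ) : ℂ) • w)
    rw [hFw, star_smul, smul_dotProduct, star_def, conj_ofReal, smul_eq_mul] at hnonneg
    refine (hT0.dotProduct_mulVec_zero_iff w).1 ((mul_eq_zero.1 ?_).resolve_left hr1'.ne)
    exact le_antisymm
      (mul_nonpos_of_nonpos_of_nonneg hr1'.le (hT0.dotProduct_mulVec_nonneg w)) hnonneg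
  rw [hTw, mulVec_zero] at hrw
  have hr0 : (r : ℂ) ≠ 0 := ofReal_ne_zero.2 (zero_lt_one.trans_le hr).ne'
  exact hw ((smul_eq_zero.1 hrw.symm).resolve_left hr0)

end NegImagTransfer

theorem stable_feedback_iff [Fintype ι'] [DecidableEq ι'] [DecidableEq κ]
    (hS : S.NegImagTransfer) (hctrl : ∀ ω : ℝ, S.ControllableAt (I * ω))
    (hobs : ∀ ω : ℝ, S.ObservableAt (I * ω)) (hTA : Stable T.A) (hT : T.StrictNegImagResponse)
    (hST : S.D * T.D = 0) (hTD : T.D.PosSemidef) :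
    Stable (S.feedback T).A ↔ ∀ μ ∈ spectrum ℂ (S.transfer 0 * T.transfer 0), μ.re < 1 :=
  ⟨fun hF _ => hS.re_lt_one_of_stable_feedback (hS.negImagResponse hctrl) hTA hT.negImagResponse hTD
    hST hF, hS.stable_feedback hctrl hobs hTA hT hST⟩

end Stability

end StateSpace

section Map

variable {ι κ K L : Type*} [Fintype ι] [DecidableEq ι] [Field K] [Field L] (f : K →+* L)

lemma map_inv_eq_inv_map (M : Matrix ι ι K) : M⁻¹.map f = (M.map f)⁻¹ := by
  rw [inv_def, inv_def, map_smul' _ _ _ (map_mul f), Ring.inverse_eq_inv', Ring.inverse_eq_inv',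
    map_inv₀]
  exact congrArg₂ (fun c N => c⁻¹ • N) (f.map_det M) (f.map_adjugate M)

lemma eq_zero_of_vecMul_eq_smul_of_rank [Fintype κ] {M : Matrix ι ι K} {N : Matrix ι κ K} {n : ℕ}
    (hrank : (of fun (i : ι) (p : Fin n × κ) => (M ^ (p.1 : ℕ) * N) i p.2).rank = Fintype.card ι)
    {s : L} {v : ι → L} (hM : v ᵥ* M.map f = s • v) (hN : v ᵥ* N.map f = 0) : v = 0 := by
  obtain ⟨W, hW⟩ := exists_mul_eq_one_of_rank_eq_card hrank
  have hpow (k : ℕ) : v ᵥ* (M.map f) ^ k = s ^ k • v := by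
    induction k with
    | zero => rw [pow_zero, pow_zero, vecMul_one, one_smul]
    | succ k ih => rw [pow_succ, ← vecMul_vecMul, ih, smul_vecMul, hM, smul_smul, pow_succ]
  have hker : v ᵥ* (of fun (i : ι) (p : Fin n × κ) => (M ^ (p.1 : ℕ) * N) i p.2).map f = 0 := by
    funext p
    have hcol : v ᵥ* (M ^ (p.1 : ℕ) * N).map f = 0 := by
      rw [Matrix.map_mul, Matrix.map_pow, ← vecMul_vecMul, hpow, smul_vecMul, hN, smul_zero]
    exact congrFun hcol p.2
  rw [← vecMul_one v, ← Matrix.map_one f (map_zero f) (map_one f), ← hW, Matrix.map_mul,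
    ← vecMul_vecMul, hker, zero_vecMul]

end Map

section Complexification

open Complex

variable {ι κ : Type*}

lemma conjTranspose_map_ofReal (M : Matrix ι κ ℝ) : (M.map ofReal)ᴴ = Mᵀ.map ofReal := by
  rw [transpose_map]
  exact Matrix.ext fun i j => conj_ofReal (M j i)

open scoped MatrixOrder in
lemma posSemidef_map_ofReal [Finite ι] {M : Matrix ι ι ℝ} (hM : M.PosSemidef) :
    (M.map ofReal).PosSemidef := by
  classical
  cases nonempty_fintype ι
  obtain ⟨N, rfl⟩ := CStarAlgebra.nonneg_iff_eq_star_mul_self.1 hM.nonneg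
  have hN : (star N * N).map ofReal = (N.map ofReal)ᴴ * N.map ofReal := by
    rw [conjTranspose_map_ofReal, star_eq_conjTranspose, conjTranspose_eq_transpose_of_trivial]
    exact Matrix.map_mul (f := ofRealHom)
  rw [hN]
  exact posSemidef_conjTranspose_mul_self _

lemma star_mem_spectrum_map_ofReal [Fintype ι] [DecidableEq ι] {M : Matrix ι ι ℝ} {s : ℂ}
    (hs : s ∈ spectrum ℂ (M.map ofReal)) : star s ∈ spectrum ℂ (M.map ofReal) := by
  obtain ⟨v, hv, hMv⟩ := mem_spectrum_iff_exists_mulVec_eq.1 hs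
  refine mem_spectrum_iff_exists_mulVec_eq.2 ⟨star v, star_ne_zero.2 hv, ?_⟩
  rw [← star_smul, ← hMv, star_mulVec, conjTranspose_map_ofReal, transpose_map, vecMul_transpose]

end Complexification

namespace StateSpace

section Real

open Complex

variable {ι ι' κ : Type*}

/-- The complexification of a system with real coefficients. -/
def ofReal (A : Matrix ι ι ℝ) (B : Matrix ι κ ℝ) (C : Matrix κ ι ℝ) (D : Matrix κ κ ℝ) :
    StateSpace ι κ :=
  ⟨A.map (↑), B.map (↑), C.map (↑), D.map (↑)⟩

variable {A : Matrix ι ι ℝ} {B : Matrix ι κ ℝ} {C : Matrix κ ι ℝ} {D : Matrix κ κ ℝ}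

lemma ofReal_D_mul_eq_zero_iff [Fintype κ] {A' : Matrix ι' ι' ℝ} {B' : Matrix ι' κ ℝ}
    {C' : Matrix κ ι' ℝ} {D' : Matrix κ κ ℝ} :
    (ofReal A B C D).D * (ofReal A' B' C' D').D = 0 ↔ D * D' = 0 := by
  have hmul : (ofReal A B C D).D * (ofReal A' B' C' D').D = (D * D').map (↑) :=
    (Matrix.map_mul (f := ofRealHom)).symm
  have hinj := Matrix.map_injective (m := κ) (n := κ) ofReal_injective
  rw [hmul, ← hinj.eq_iff (a := D * D'), Matrix.map_zero _ ofReal_zero]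

lemma feedback_ofReal_A [Fintype κ] {A' : Matrix ι' ι' ℝ} {B' : Matrix ι' κ ℝ} {C' : Matrix κ ι' ℝ}
    {D' : Matrix κ κ ℝ} :
    ((ofReal A B C D).feedback (ofReal A' B' C' D')).A =
      (fromBlocks (A + B * D' * C) (B * C') (B' * C) (A' + B' * D * C')).map (↑) := by
  rw [fromBlocks_map]
  change fromBlocks _ _ _ _ = fromBlocks (Matrix.map _ ofRealHom) (Matrix.map _ ofRealHom)
    (Matrix.map _ ofRealHom) (Matrix.map _ ofRealHom)
  simp only [Matrix.map_add _ (map_add _), Matrix.map_mul]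
  rfl

variable [Fintype ι] [DecidableEq ι]

lemma transfer_ofReal_zero (h0 : 0 ∉ spectrum ℂ (ofReal A B C D).A) :
    (ofReal A B C D).transfer 0 = (D - C * A⁻¹ * B).map (↑) := by
  rw [transfer_zero h0]
  change D.map ofRealHom - C.map ofRealHom * (A.map ofRealHom)⁻¹ * B.map ofRealHom =
    Matrix.map _ ofRealHom
  rw [← map_inv_eq_inv_map, ← Matrix.map_mul, ← Matrix.map_mul, Matrix.map_sub _ (map_sub _)]

lemma transfer_ofReal_star (s : ℂ) :
    (ofReal A B C D).transfer (star s) = ((ofReal A B C D).transfer s)ᴴᵀ := by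
  simp only [transfer, ofReal, conjTranspose_add, conjTranspose_mul, conjTranspose_nonsing_inv,
    conjTranspose_sub, conjTranspose_smul, conjTranspose_one, conjTranspose_map_ofReal,
    transpose_add, transpose_mul, transpose_nonsing_inv, transpose_sub, transpose_smul,
    transpose_one, transpose_map, transpose_transpose, Matrix.mul_assoc]

variable [Fintype κ]

lemma quad_transfer_ofReal_star (s : ℂ) (u : κ → ℂ) :
    quad ((ofReal A B C D).transfer (star s)) (star u) =
      star (quad ((ofReal A B C D).transfer s) u) := by
  rw [transfer_ofReal_star, quad_transpose_star, quad_conjTranspose]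

lemma mul_im_quad_transfer_ofReal_neg (ω : ℝ) (u : κ → ℂ) :
    -ω * (quad ((ofReal A B C D).transfer (I * (-ω : ℝ))) (star u)).im =
      ω * (quad ((ofReal A B C D).transfer (I * ω)) u).im := by
  have hstar : I * ((-ω : ℝ) : ℂ) = star (I * (ω : ℂ)) := by simp
  rw [hstar, quad_transfer_ofReal_star, star_def, conj_im, neg_mul_neg]

lemma tendsto_quad_transfer_ofReal_star {z c : ℂ} {u : κ → ℂ}
    (h : Tendsto (fun s => (s - z) * quad ((ofReal A B C D).transfer s) u) (𝓝[≠] z) (𝓝 c)) :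
    Tendsto (fun s => (s - star z) * quad ((ofReal A B C D).transfer s) (star u)) (𝓝[≠] star z)
      (𝓝 (star c)) := by
  have hstar : Tendsto (star : ℂ → ℂ) (𝓝[≠] star z) (𝓝[≠] z) :=
    tendsto_nhdsWithin_iff.2
      ⟨(continuous_star.tendsto' _ _ (star_star z)).mono_left nhdsWithin_le_nhds,
        eventually_mem_nhdsWithin.mono fun s hs hsz => hs (star_eq_iff_star_eq.1 hsz).symm⟩
  refine ((continuous_star.tendsto c).comp (h.comp hstar)).congr fun s => ?_
  simp only [Function.comp_apply, star_mul', star_sub, star_star, ← quad_transfer_ofReal_star]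

/-- A real system responds to conjugate inputs at conjugate frequencies by conjugate outputs, so the
negative imaginary conditions at positive frequencies imply those at negative frequencies. -/
lemma negImagTransfer_ofReal (hA : ∀ s ∈ spectrum ℂ (ofReal A B C D).A, s ≠ 0 ∧ s.re ≤ 0)
    (him : ∀ ω : ℝ, 0 < ω → I * ω ∉ spectrum ℂ (ofReal A B C D).A → ∀ u,
      (quad ((ofReal A B C D).transfer (I * ω)) u).im ≤ 0)
    (hpole : ∀ ω : ℝ, 0 < ω → I * ω ∈ spectrum ℂ (ofReal A B C D).A → ∀ u, ∃ k : ℝ, 0 ≤ k ∧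
      Tendsto (fun s => (s - I * ω) * quad ((ofReal A B C D).transfer s) u) (𝓝[≠] (I * ω))
        (𝓝 (-(I * ω) * k))) :
    (ofReal A B C D).NegImagTransfer := fun u => by
  have hneg (ω : ℝ) : I * ((-ω : ℝ) : ℂ) = star (I * (ω : ℂ)) := by simp
  refine
    { finite_poles := Matrix.finite_spectrum _
      zero_notMem := fun h0 => (hA 0 h0).1 rfl
      re_nonpos := fun s hs => (hA s hs).2
      differentiableAt := fun s hs => differentiableAt_quad_transfer _ hs u
      tendsto_cobounded := tendsto_quad_transfer_cobounded _ u
      mul_im_nonpos := fun ω hω => ?_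
      tendsto_pole := fun ω hω => ?_ }
  · rcases lt_trichotomy ω 0 with hlt | rfl | hgt
    · rw [← mul_im_quad_transfer_ofReal_neg]
      refine mul_nonpos_of_nonneg_of_nonpos (neg_pos.2 hlt).le (him _ (neg_pos.2 hlt) ?_ _)
      rw [hneg]
      exact fun h => hω (star_star (I * (ω : ℂ)) ▸ star_mem_spectrum_map_ofReal h)
    · rw [zero_mul]
    · exact mul_nonpos_of_nonneg_of_nonpos hgt.le (him ω hgt hω u)
  · rcases lt_trichotomy ω 0 with hlt | rfl | hgt
    · obtain ⟨k, hk, hlim⟩ := hpole (-ω) (neg_pos.2 hlt)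
        (hneg ω ▸ star_mem_spectrum_map_ofReal hω) (star u)
      refine ⟨k, hk, ?_⟩
      simpa [hneg] using tendsto_quad_transfer_ofReal_star hlim
    · exact absurd rfl (hA _ (by simpa using hω)).1
    · exact hpole ω hgt hω u

lemma strictNegImagResponse_ofReal (hA : Stable (ofReal A B C D).A)
    (him : ∀ ω : ℝ, 0 < ω → ∀ u, u ≠ 0 → (quad ((ofReal A B C D).transfer (I * ω)) u).im < 0) :
    (ofReal A B C D).StrictNegImagResponse := by
  intro ω x u y hr hω hu
  rw [hr.output_eq (hA.notMem_spectrum (by simp)), ← quad]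
  rcases hω.lt_or_gt with hlt | hgt
  · rw [← mul_im_quad_transfer_ofReal_neg]
    exact mul_neg_of_pos_of_neg (neg_pos.2 hlt) (him _ (neg_pos.2 hlt) _ (star_ne_zero.2 hu))
  · exact mul_neg_of_pos_of_neg hgt (him ω hgt u hu)

end Real

end StateSpace

section Bridge

open Complex StateSpace

variable {n m : ℕ} {A : Matrix (Fin n) (Fin n) ℝ} {B : Matrix (Fin n) (Fin m) ℝ}
  {C : Matrix (Fin m) (Fin n) ℝ} {D : Matrix (Fin m) (Fin m) ℝ}

lemma IsMinimal.controllableAt (h : IsMinimal A B C) (s : ℂ) :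
    (ofReal A B C D).ControllableAt s := fun _ hA hB =>
  eq_zero_of_vecMul_eq_smul_of_rank ofRealHom (h.1.trans (Fintype.card_fin n).symm) hA hB

lemma IsMinimal.observableAt (h : IsMinimal A B C) (s : ℂ) :
    (ofReal A B C D).ObservableAt s := fun x hA hC => by
  refine eq_zero_of_vecMul_eq_smul_of_rank ofRealHom (M := Aᵀ) (N := Cᵀ) (n := n) (s := s) ?_ ?_ ?_
  · rw [← rank_transpose, Fintype.card_fin]
    simp only [← transpose_pow, ← transpose_mul]
    exact h.2
  · rwa [transpose_map, vecMul_transpose]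
  · rwa [transpose_map, vecMul_transpose]

lemma IsNI.tendsto_quad_transfer (h : IsNI A B C D) {ω : ℝ} (hω : 0 < ω)
    (hpole : I * ω ∈ eigs A) (u : Fin m → ℂ) : ∃ k : ℝ, 0 ≤ k ∧
      Tendsto (fun s => (s - I * ω) * quad ((ofReal A B C D).transfer s) u) (𝓝[≠] (I * ω))
        (𝓝 (-(I * ω) * k)) := by
  obtain ⟨K, hlim, hK⟩ := h.2.2 ω hω hpole
  obtain ⟨r, hr, (hrK : (r : ℂ) = quad K u)⟩ :=
    RCLike.nonneg_iff_exists_ofReal.1 (hK.dotProduct_mulVec_nonneg u)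
  refine ⟨r / ω, div_nonneg hr hω.le, ?_⟩
  have hω0 : (ω : ℂ) ≠ 0 := ofReal_ne_zero.2 hω.ne'
  have hval : -I * quad K u = -(I * ω) * (r / ω : ℝ) := by
    rw [← hrK, ofReal_div]
    field_simp
  rw [← hval]
  refine ((((continuous_quad u).tendsto K).comp hlim).const_mul (-I)).congr fun s => ?_
  change -I * quad ((s - I * ω) • I • (ofReal A B C D).transfer s) u = _
  rw [quad_smul, quad_smul]
  linear_combination (-(s - I * ω) * quad ((ofReal A B C D).transfer s) u) * I_mul_I

lemma IsNI.negImagTransfer (h : IsNI A B C D) : (ofReal A B C D).NegImagTransfer := by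
  refine negImagTransfer_ofReal h.1 (fun ω hω hpole u => ?_) fun ω hω => h.tendsto_quad_transfer hω
  have hnonneg := (h.2.1 ω hω hpole).dotProduct_mulVec_nonneg u
  rw [← quad, quad_I_smul_sub_conjTranspose, zero_le_real] at hnonneg
  exact nonpos_of_mul_nonneg_right hnonneg (by norm_num)

lemma IsSNI.strictNegImagResponse (h : IsSNI A B C D) :
    (ofReal A B C D).StrictNegImagResponse := by
  refine strictNegImagResponse_ofReal h.1 fun ω hω u hu => ?_
  have hpos := (h.2 ω hω).dotProduct_mulVec_pos hu
  rw [← quad, quad_I_smul_sub_conjTranspose, zero_lt_real] at hpos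
  exact neg_of_mul_pos_right hpos (by norm_num)

lemma IsSNI.stable (h : IsSNI A B C D) : Stable (ofReal A B C D).A :=
  h.1

lemma IsSNI.negImagTransfer (h : IsSNI A B C D) : (ofReal A B C D).NegImagTransfer :=
  h.strictNegImagResponse.negImagResponse.negImagTransfer h.stable

lemma eigs_dcGain_mul {n' : ℕ} {A' : Matrix (Fin n') (Fin n') ℝ} {B' : Matrix (Fin n') (Fin m) ℝ}
    {C' : Matrix (Fin m) (Fin n') ℝ} {D' : Matrix (Fin m) (Fin m) ℝ} (hA : 0 ∉ eigs A)
    (hA' : 0 ∉ eigs A') :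
    eigs ((D - C * A⁻¹ * B) * (D' - C' * A'⁻¹ * B')) =
      spectrum ℂ ((ofReal A B C D).transfer 0 * (ofReal A' B' C' D').transfer 0) := by
  rw [transfer_ofReal_zero hA, transfer_ofReal_zero hA']
  exact congrArg _ (Matrix.map_mul (f := ofRealHom))

end Bridge

theorem ni_sni_stability_general {n ns m : ℕ}
    (A : Matrix (Fin n) (Fin n) ℝ) (B : Matrix (Fin n) (Fin m) ℝ)
    (C : Matrix (Fin m) (Fin n) ℝ) (D : Matrix (Fin m) (Fin m) ℝ)
    (As : Matrix (Fin ns) (Fin ns) ℝ) (Bs : Matrix (Fin ns) (Fin m) ℝ)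
    (Cs : Matrix (Fin m) (Fin ns) ℝ) (Ds : Matrix (Fin m) (Fin m) ℝ)
    (hmin : IsMinimal A B C) (hNI : IsNI A B C D) (hSNI : IsSNI As Bs Cs Ds)
    (hDDs : D * Ds = 0) (hDs : Ds.PosSemidef) :
    IsUnit (1 - Ds * D) ∧ IsUnit (1 - D * Ds) ∧
    (∀ μ ∈ eigs ((D - C * A⁻¹ * B) * (Ds - Cs * As⁻¹ * Bs)), μ.im = 0) ∧
    (IsHurwitz (Matrix.fromBlocks
        (A + B * (1 - Ds * D)⁻¹ * Ds * C) (B * (1 - Ds * D)⁻¹ * Cs)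
        (Bs * (1 - D * Ds)⁻¹ * C) (As + Bs * (1 - D * Ds)⁻¹ * D * Cs)) ↔
      ∀ μ ∈ eigs ((D - C * A⁻¹ * B) * (Ds - Cs * As⁻¹ * Bs)), μ.re < 1) := by
  have hS := hNI.negImagTransfer
  have hT := hSNI.negImagTransfer
  have hTD : (StateSpace.ofReal As Bs Cs Ds).D.PosSemidef := posSemidef_map_ofReal hDs
  have hST : (StateSpace.ofReal A B C D).D * (StateSpace.ofReal As Bs Cs Ds).D = 0 :=
    StateSpace.ofReal_D_mul_eq_zero_iff.2 hDDs
  have hDsD : Ds * D = 0 := StateSpace.ofReal_D_mul_eq_zero_iff.1 (hS.D_mul_D_eq_zero hT hST)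
  simp only [hDsD, hDDs, sub_zero, inv_one, Matrix.mul_one,
    eigs_dcGain_mul hS.zero_notMem hT.zero_notMem]
  refine ⟨isUnit_one, isUnit_one,
    fun μ => hS.im_eq_zero_of_mem_spectrum_transfer_zero_mul hT hTD, ?_⟩
  rw [← StateSpace.stable_feedback_iff hS (fun ω => hmin.controllableAt _)
    (fun ω => hmin.observableAt _) hSNI.stable hSNI.strictNegImagResponse hST hTD,
    StateSpace.feedback_ofReal_A]
  exact Iff.rfl

/-- Main NI stability theorem: the positive feedback interconnection of an NI system and an
SNI system is internally stable iff the dc loop gain eigenvalues are less than one. -/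
theorem ni_sni_stability {n ns m : ℕ}
    (A : Matrix (Fin n) (Fin n) ℝ) (B : Matrix (Fin n) (Fin m) ℝ)
    (C : Matrix (Fin m) (Fin n) ℝ) (D : Matrix (Fin m) (Fin m) ℝ)
    (As : Matrix (Fin ns) (Fin ns) ℝ) (Bs : Matrix (Fin ns) (Fin m) ℝ)
    (Cs : Matrix (Fin m) (Fin ns) ℝ) (Ds : Matrix (Fin m) (Fin m) ℝ)
    (hmin : IsMinimal A B C) (hmins : IsMinimal As Bs Cs)
    (hNI : IsNI A B C D) (hSNI : IsSNI As Bs Cs Ds)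
    (hDDs : D * Ds = 0) (hDs : Ds.PosSemidef) :
    IsUnit (1 - Ds * D) ∧ IsUnit (1 - D * Ds) ∧
    (∀ μ ∈ eigs ((D - C * A⁻¹ * B) * (Ds - Cs * As⁻¹ * Bs)), μ.im = 0) ∧
    (IsHurwitz (Matrix.fromBlocks
        (A + B * (1 - Ds * D)⁻¹ * Ds * C) (B * (1 - Ds * D)⁻¹ * Cs)
        (Bs * (1 - D * Ds)⁻¹ * C) (As + Bs * (1 - D * Ds)⁻¹ * D * Cs)) ↔
      ∀ μ ∈ eigs ((D - C * A⁻¹ * B) * (Ds - Cs * As⁻¹ * Bs)), μ.re < 1) :=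
  ni_sni_stability_general A B C D As Bs Cs Ds hmin hNI hSNI hDDs hDs
end

section
/- Let (A,B,C,0) be a minimal realization of a strictly proper m×m transfer function R(s) = C(sI − A)⁻¹B that is negative imaginary in the extended sense allowing a simple pole at the origin. Let (A_s,B_s,C_s,D_s) be a minimal realization of an m×m transfer function R_s that is strictly negative imaginary and satisfies R_s(s) + R_s(s)ᴴ ≺ 0 for every s ∈ ℂ with Re(s) ≥ 0 (in particular R_s(0) is real symmetric negative definite). If the matrix A + B·R_s(0)·C is nonsingular, then the closed-loop state matrix of the positive feedback interconnection, Ā = [[A + BD_sC, BC_s], [B_sC, A_s]], is Hurwitz. -/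
open Matrix Filter Topology ComplexOrder

/-!
Let `μ` be a closed-loop eigenvalue with `Re μ ≥ 0` and, by conjugation, `Im μ ≥ 0`. As `A_s` is
Hurwitz, the controller state can be eliminated, which leaves a plant state `x ≠ 0` with
`μ x - A x = B u`, where `u = R_s(μ) v` and `v = C x`. For `μ = 0` this contradicts the
nonsingularity of `A + B R_s(0) C`. For `μ ≠ 0` observability gives `v ≠ 0`, and the sign of
`Re (conj μ * (vᴴ u))` is computed in two ways.

* Plant: multiplication by `s` removes the pole at the origin and turns the negative imaginary `R`
  into `s R(s)`, which is positive real by the minimum principle for the real part. If `μ` is not a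
  pole of `R`, then `v = R(μ) u` and the sign is nonnegative. If it is one, then by controllability
  the residue annihilates `u`, so that `uᴴ R(s) u → uᴴ v` as `s → μ` and the sign is the same.
* Controller: `R_s(s) = R_s(0) - s G(s)` with `G` positive real, so that for `Re μ > 0` the number
  `Re μ * vᴴ R_s(0) v - |μ|² * Re (vᴴ G(μ) v)` is negative; for `Re μ = 0` strict negative
  imaginariness gives the same conclusion.
-/

section MinimumPrinciple

variable {U : Set ℂ} {g : ℂ → ℂ}

lemma isOpen_setOf_re_le_of_forall_re_le (hU : IsOpen U) (hg : DifferentiableOn ℂ g U) {z : ℂ}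
    (hmin : ∀ w ∈ U, (g z).re ≤ (g w).re) : IsOpen {w ∈ U | (g w).re ≤ (g z).re} := by
  refine isOpen_iff_eventually.2 fun w hw => ?_
  have hdiff : ∀ᶠ t in 𝓝 w, DifferentiableAt ℂ (fun t => Complex.exp (-g t)) t :=
    (hU.eventually_mem hw.1).mono fun t ht => (hg.differentiableAt (hU.mem_nhds ht)).neg.cexp
  have hmax : IsLocalMax (norm ∘ fun t => Complex.exp (-g t)) w := by
    filter_upwards [hU.mem_nhds hw.1] with t ht
    simpa only [Function.comp_apply, Complex.norm_exp, Complex.neg_re, Real.exp_le_exp,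
      neg_le_neg_iff] using hw.2.trans (hmin t ht)
  filter_upwards [Complex.norm_eventually_eq_of_isLocalMax hdiff hmax, hU.mem_nhds hw.1]
    with t ht htU
  simp only [Complex.norm_exp, Complex.neg_re, Real.exp_eq_exp, neg_inj] at ht
  exact ⟨htU, ht.trans_le hw.2⟩

lemma re_nonneg_of_isCompact_setOf_re_le (hU : IsOpen U) (hg : DifferentiableOn ℂ g U)
    (hcompact : ∀ c < 0, IsCompact {w ∈ U | (g w).re ≤ c}) {s : ℂ} (hs : s ∈ U) :
    0 ≤ (g s).re := by
  by_contra! hneg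
  have hcont : ContinuousOn (fun w => (g w).re) {w ∈ U | (g w).re ≤ (g s).re} :=
    Complex.continuous_re.comp_continuousOn (hg.continuousOn.mono fun _ hw => hw.1)
  obtain ⟨z, hz, hmin⟩ := (hcompact _ hneg).exists_isMinOn ⟨s, hs, le_rfl⟩ hcont
  have hminU : ∀ w ∈ U, (g z).re ≤ (g w).re := fun w hw =>
    (le_total (g w).re (g s).re).elim (fun h => hmin ⟨hw, h⟩) hz.2.trans
  have hminimizers : IsCompact {w ∈ U | (g w).re ≤ (g z).re} := hcompact _ (hz.2.trans_lt hneg)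
  have hclopen : IsClopen {w ∈ U | (g w).re ≤ (g z).re} :=
    ⟨hminimizers.isClosed, isOpen_setOf_re_le_of_forall_re_le hU hg hminU⟩
  exact noncompact_univ ℂ (hclopen.eq_univ ⟨z, hz.1, le_rfl⟩ ▸ hminimizers)

lemma isCompact_setOf_re_le_s14 {c : ℝ} (hU : IsOpen U) (hg : ContinuousOn g U)
    (hfrontier : ∀ ζ ∈ frontier U, ∀ᶠ s in 𝓝[U] ζ, c < (g s).re)
    (hinfty : ∀ᶠ s in Bornology.cobounded ℂ, s ∈ U → c < (g s).re) :
    IsCompact {s ∈ U | (g s).re ≤ c} := by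
  refine Metric.isCompact_of_isClosed_isBounded (isClosed_of_closure_subset fun ζ hζ => ?_) ?_
  · have hfreq : ∃ᶠ s in 𝓝[U] ζ, (g s).re ≤ c :=
      frequently_nhdsWithin_iff.2 ((mem_closure_iff_frequently.1 hζ).mono fun _ h => h.symm)
    have hζU : ζ ∈ U := by
      by_contra hζU
      have hζfr : ζ ∈ frontier U := by
        rw [hU.frontier_eq]
        exact ⟨closure_mono (Set.sep_subset _ _) hζ, hζU⟩
      exact hfreq ((hfrontier ζ hζfr).mono fun _ => not_le.2)
    refine ⟨hζU, not_lt.1 fun hlt => hfreq ?_⟩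
    filter_upwards [(Complex.continuous_re.continuousAt.comp_continuousWithinAt
      (hg ζ hζU)).eventually (lt_mem_nhds hlt)] with s hs using not_le.2 hs
  · rw [← Bornology.isCobounded_compl_iff]
    exact hinfty.mono fun s hs hs' => (hs hs'.1).not_ge hs'.2

end MinimumPrinciple

section ImaginaryAxis

variable {g : ℂ → ℂ}

lemma exists_continuousAt_eq_add_div {ζ r : ℂ} (hg : ∀ᶠ s in 𝓝[≠] ζ, DifferentiableAt ℂ g s)
    (hr : Tendsto (fun s => (s - ζ) * g s) (𝓝[≠] ζ) (𝓝 r)) :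
    ∃ h : ℂ → ℂ, ContinuousAt h ζ ∧ ∀ s ≠ ζ, g s = h s + r / (s - ζ) := by
  set p : ℂ → ℂ := Function.update (fun s => (s - ζ) * g s) ζ r
  have hp : ∀ s ≠ ζ, p s = (s - ζ) * g s := fun s hs => Function.update_of_ne hs _ _
  have hpζ : p ζ = r := Function.update_self _ _ _
  have hanalytic : AnalyticAt ℂ p ζ := by
    refine Complex.analyticAt_of_differentiable_on_punctured_nhds_of_continuousAt ?_
      (continuousAt_update_same.2 hr)
    filter_upwards [hg, self_mem_nhdsWithin] with s hs hne
    have : DifferentiableAt ℂ (fun s => (s - ζ) * g s) s := by fun_prop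
    exact this.congr_of_eventuallyEq (eventually_of_mem (isOpen_ne.mem_nhds hne) hp)
  refine ⟨dslope p ζ, continuousAt_dslope_same.2 hanalytic.differentiableAt, fun s hs => ?_⟩
  have hne : s - ζ ≠ 0 := sub_ne_zero.2 hs
  rw [dslope_of_ne _ hs, slope_def_field, hp s hs, hpζ]
  field_simp
  ring

lemma tendsto_I_mul_ofReal_nhdsNE (ω : ℝ) :
    Tendsto (fun t : ℝ => Complex.I * t) (𝓝[≠] ω) (𝓝[≠] (Complex.I * ω)) := by
  have hinj : Function.Injective fun t : ℝ => Complex.I * t :=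
    (mul_right_injective₀ Complex.I_ne_zero).comp Complex.ofReal_injective
  exact (Continuous.tendsto (by fun_prop) ω).inf
    (tendsto_principal_principal.2 fun t ht => hinj.ne ht)

lemma eventually_lt_re_nhdsWithin_of_simple_pole {ω r c : ℝ} (hr₀ : 0 ≤ r) (hc : c < 0)
    (hg : ∀ᶠ s in 𝓝[≠] (Complex.I * ω), DifferentiableAt ℂ g s)
    (hr : Tendsto (fun s => (s - Complex.I * ω) * g s) (𝓝[≠] (Complex.I * ω)) (𝓝 r))
    (haxis : ∀ᶠ t : ℝ in 𝓝[≠] ω, 0 ≤ (g (Complex.I * t)).re) :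
    ∀ᶠ s in 𝓝[{s | 0 < s.re}] (Complex.I * ω), c < (g s).re := by
  obtain ⟨h, hh, hgh⟩ := exists_continuousAt_eq_add_div hg hr
  have hreh : ContinuousAt (fun s => (h s).re) (Complex.I * ω) := by fun_prop
  have hpath := tendsto_I_mul_ofReal_nhdsNE ω
  have hnonneg : 0 ≤ (h (Complex.I * ω)).re := by
    refine ge_of_tendsto (hreh.tendsto.comp (hpath.mono_right nhdsWithin_le_nhds)) ?_
    filter_upwards [haxis, hpath.eventually self_mem_nhdsWithin] with t ht hne
    -- On the axis the polar part is purely imaginary.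
    have hpolar : ((r : ℂ) / (Complex.I * t - Complex.I * ω)).re = 0 := by
      simp [← mul_sub, Complex.div_re]
    simpa [hgh _ hne, hpolar] using ht
  filter_upwards [nhdsWithin_le_nhds (hreh.eventually (lt_mem_nhds (hc.trans_le hnonneg))),
    self_mem_nhdsWithin] with s hs (hspos : 0 < s.re)
  have hne : s ≠ Complex.I * ω := by rintro rfl; simp at hspos
  have hpolar : 0 ≤ ((r : ℂ) / (s - Complex.I * ω)).re := by
    simp only [Complex.div_re, Complex.ofReal_re, Complex.ofReal_im, Complex.sub_re,
      Complex.re_mul_ofReal, Complex.I_re, zero_mul, sub_zero, zero_div, add_zero]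
    exact div_nonneg (mul_nonneg hr₀ hspos.le) (Complex.normSq_nonneg _)
  rw [hgh s hne, Complex.add_re]
  linarith

theorem re_nonneg_of_imaginary_axis {L : ℂ} (hg : DifferentiableOn ℂ g {s | 0 < s.re})
    (hg' : ∀ᶠ s in cofinite, DifferentiableAt ℂ g s)
    (hres : ∀ ω : ℝ, ∃ r : ℝ, 0 ≤ r ∧
      Tendsto (fun s => (s - Complex.I * ω) * g s) (𝓝[≠] (Complex.I * ω)) (𝓝 r))
    (haxis : ∀ᶠ t : ℝ in cofinite, 0 ≤ (g (Complex.I * t)).re)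
    (hinfty : Tendsto g (Bornology.cobounded ℂ) (𝓝 L)) {s : ℂ} (hs : 0 < s.re) :
    0 ≤ (g s).re := by
  have hopen : IsOpen {s : ℂ | 0 < s.re} := isOpen_lt continuous_const Complex.continuous_re
  have hre : Tendsto (fun s => (g s).re) (Bornology.cobounded ℂ) (𝓝 L.re) :=
    (Complex.continuous_re.tendsto L).comp hinfty
  have hL : 0 ≤ L.re := by
    have hpath : Tendsto (fun t : ℝ => Complex.I * t) atTop (Bornology.cobounded ℂ) := by
      rw [← tendsto_norm_atTop_iff_cobounded]
      simpa using tendsto_abs_atTop_atTop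
    exact ge_of_tendsto (hre.comp hpath) (atTop_le_cofinite haxis)
  refine re_nonneg_of_isCompact_setOf_re_le hopen hg (fun c hc => ?_) hs
  refine isCompact_setOf_re_le_s14 hopen hg.continuousOn (fun ζ hζ => ?_)
    ((hre.eventually (lt_mem_nhds (hc.trans_le hL))).mono fun _ h _ => h)
  obtain ⟨ω, rfl⟩ : ∃ ω : ℝ, Complex.I * ω = ζ := by
    rw [Complex.frontier_setOfPred_lt_re] at hζ
    exact ⟨ζ.im, Complex.ext (by simpa using hζ.symm) (by simp)⟩
  obtain ⟨r, hr₀, hr⟩ := hres ω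
  exact eventually_lt_re_nhdsWithin_of_simple_pole hr₀ hc (nhdsNE_le_cofinite _ hg') hr
    (nhdsNE_le_cofinite _ haxis)

end ImaginaryAxis

section QuadraticForms

variable {m : Type*}

lemma I_smul_sub_conjTranspose (T : Matrix m m ℂ) :
    Complex.I • (T - Tᴴ) = Complex.I • T + (Complex.I • T)ᴴ := by
  simp [sub_eq_add_neg]

variable [Fintype m] {T : Matrix m m ℂ}

lemma star_dotProduct_add_conjTranspose_mulVec (T : Matrix m m ℂ) (u : m → ℂ) :
    star u ⬝ᵥ (T + Tᴴ) *ᵥ u = (2 * (star u ⬝ᵥ T *ᵥ u).re : ℝ) := by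
  have hconj : star u ⬝ᵥ Tᴴ *ᵥ u = star (star u ⬝ᵥ T *ᵥ u) := by
    rw [← star_dotProduct, star_mulVec, dotProduct_mulVec]
  rw [add_mulVec, dotProduct_add, hconj]
  exact Complex.add_conj _

lemma posSemidef_add_conjTranspose_iff :
    (T + Tᴴ).PosSemidef ↔ ∀ u, 0 ≤ (star u ⬝ᵥ T *ᵥ u).re := by
  simp only [posSemidef_iff_dotProduct_mulVec, isHermitian_add_transpose_self, true_and,
    star_dotProduct_add_conjTranspose_mulVec, Complex.zero_le_real, Nat.ofNat_pos,
    mul_nonneg_iff_of_pos_left]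

lemma re_star_dotProduct_mulVec_pos (hT : (T + Tᴴ).PosDef) {u : m → ℂ} (hu : u ≠ 0) :
    0 < (star u ⬝ᵥ T *ᵥ u).re := by
  have := hT.dotProduct_mulVec_pos hu
  rw [star_dotProduct_add_conjTranspose_mulVec, Complex.zero_lt_real] at this
  linarith

end QuadraticForms

section Complexification

variable {k l p : Type*}

lemma map_ofReal_mul [Fintype l] (M : Matrix k l ℝ) (N : Matrix l p ℝ) :
    (M * N).map Complex.ofReal = M.map Complex.ofReal * N.map Complex.ofReal :=
  Matrix.map_mul (f := Complex.ofRealHom)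

lemma map_ofReal_add (M N : Matrix k l ℝ) :
    (M + N).map Complex.ofReal = M.map Complex.ofReal + N.map Complex.ofReal :=
  Matrix.map_add _ Complex.ofReal_add M N

lemma map_ofReal_sub (M N : Matrix k l ℝ) :
    (M - N).map Complex.ofReal = M.map Complex.ofReal - N.map Complex.ofReal :=
  Matrix.map_sub _ Complex.ofReal_sub M N

lemma conjTranspose_transpose_map_ofReal (M : Matrix k l ℝ) :
    (M.map Complex.ofReal)ᴴᵀ = M.map Complex.ofReal := by
  ext i j
  simp

lemma star_map_ofReal_mulVec [Fintype l] (M : Matrix k l ℝ) (x : l → ℂ) :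
    M.map Complex.ofReal *ᵥ star x = star (M.map Complex.ofReal *ᵥ x) := by
  ext i
  simp [mulVec, dotProduct]

variable [Fintype k] [DecidableEq k]

lemma map_ofReal_pow (M : Matrix k k ℝ) (j : ℕ) :
    (M ^ j).map Complex.ofReal = M.map Complex.ofReal ^ j :=
  Matrix.map_pow M Complex.ofRealHom j

lemma det_map_ofReal (M : Matrix k k ℝ) : (M.map Complex.ofReal).det = M.det :=
  (Complex.ofRealHom.map_det M).symm

lemma map_ofReal_inv {M : Matrix k k ℝ} (hM : M.det ≠ 0) :
    M⁻¹.map Complex.ofReal = (M.map Complex.ofReal)⁻¹ := by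
  refine (inv_eq_left_inv ?_).symm
  rw [← map_ofReal_mul, nonsing_inv_mul _ hM.isUnit]
  exact Matrix.map_one _ Complex.ofReal_zero Complex.ofReal_one

end Complexification

section Eigenvalues

variable {k : Type*} [Fintype k] [DecidableEq k] {A : Matrix k k ℝ} {μ : ℂ}

lemma mem_eigs_iff : μ ∈ eigs A ↔ ∃ x ≠ 0, A.map Complex.ofReal *ᵥ x = μ • x := by
  rw [eigs, spectrum.mem_iff, isUnit_iff_isUnit_det, isUnit_iff_ne_zero, not_not,
    ← exists_mulVec_eq_zero_iff, Algebra.algebraMap_eq_smul_one]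
  refine exists_congr fun x => and_congr_right fun _ => ?_
  rw [sub_mulVec, smul_mulVec, one_mulVec, sub_eq_zero, eq_comm]

lemma zero_mem_eigs_iff : 0 ∈ eigs A ↔ A.det = 0 := by
  rw [eigs, spectrum.zero_mem_iff, isUnit_iff_isUnit_det, isUnit_iff_ne_zero, not_not,
    det_map_ofReal, Complex.ofReal_eq_zero]

lemma star_mem_eigs (hμ : μ ∈ eigs A) : star μ ∈ eigs A := by
  obtain ⟨x, hx, hAx⟩ := mem_eigs_iff.1 hμ
  exact mem_eigs_iff.2
    ⟨star x, star_ne_zero.2 hx, by rw [star_map_ofReal_mulVec, hAx, star_smul]⟩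

lemma isHurwitz_of_forall_im_nonneg (h : ∀ μ ∈ eigs A, 0 ≤ μ.im → μ.re < 0) : IsHurwitz A := by
  intro μ hμ
  rcases le_total 0 μ.im with him | him
  · exact h μ hμ him
  · simpa using h (star μ) (star_mem_eigs hμ) (by simpa using him)

lemma finite_eigs (A : Matrix k k ℝ) : (eigs A).Finite :=
  Matrix.finite_spectrum _

lemma eventually_notMem_eigs (A : Matrix k k ℝ) (μ : ℂ) : ∀ᶠ s in 𝓝[≠] μ, s ∉ eigs A :=
  nhdsNE_le_cofinite μ (finite_eigs A).eventually_cofinite_notMem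

lemma eventually_I_mul_ofReal_notMem_eigs (A : Matrix k k ℝ) :
    ∀ᶠ t : ℝ in cofinite, Complex.I * t ∉ eigs A :=
  ((mul_right_injective₀ Complex.I_ne_zero).comp Complex.ofReal_injective).tendsto_cofinite
    (finite_eigs A).eventually_cofinite_notMem

end Eigenvalues

section Resolvent

variable {k : Type*} [Fintype k] [DecidableEq k] {M : Matrix k k ℂ} {s : ℂ}

lemma tendsto_resolvent_cobounded (M : Matrix k k ℂ) :
    Tendsto (resolvent M) (Bornology.cobounded ℂ) (𝓝 0) :=
  open scoped Matrix.Norms.Operator in spectrum.resolvent_tendsto_cobounded M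

lemma continuousAt_resolvent (hs : s ∉ spectrum ℂ M) : ContinuousAt (resolvent M) s := by
  open scoped Matrix.Norms.Operator in
  exact (spectrum.hasDerivAt_resolvent_const_left (spectrum.notMem_iff.1 hs)).continuousAt

lemma differentiableAt_resolvent_apply (hs : s ∉ spectrum ℂ M) (i j : k) :
    DifferentiableAt ℂ (fun s => resolvent M s i j) s := by
  open scoped Matrix.Norms.Operator in
  exact (LinearMap.toContinuousLinearMap (entryLinearMap ℂ ℂ i j)).differentiableAt.comp s
    (spectrum.hasDerivAt_resolvent_const_left (spectrum.notMem_iff.1 hs)).differentiableAt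

lemma smul_resolvent_eq_one_add_mul_resolvent (hs : s ∉ spectrum ℂ M) :
    s • resolvent M s = 1 + M * resolvent M s := by
  have hinv : (s • 1 - M) * resolvent M s = 1 := by
    rw [← Algebra.algebraMap_eq_smul_one]
    exact Ring.mul_inverse_cancel _ (spectrum.notMem_iff.1 hs)
  rwa [sub_mul, smul_one_mul, sub_eq_iff_eq_add] at hinv

lemma smul_resolvent_eq_one_add_resolvent_mul (hs : s ∉ spectrum ℂ M) :
    s • resolvent M s = 1 + resolvent M s * M := by
  have hinv : resolvent M s * (s • 1 - M) = 1 := by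
    rw [← Algebra.algebraMap_eq_smul_one]
    exact Ring.inverse_mul_cancel _ (spectrum.notMem_iff.1 hs)
  rwa [mul_sub, mul_smul_one, sub_eq_iff_eq_add] at hinv

lemma eq_resolvent_mulVec (hs : s ∉ spectrum ℂ M) {x y : k → ℂ} (hxy : y + M *ᵥ x = s • x) :
    x = resolvent M s *ᵥ y := by
  rw [eq_sub_of_add_eq hxy, mulVec_sub, mulVec_smul, ← smul_mulVec,
    smul_resolvent_eq_one_add_resolvent_mul hs, add_mulVec, one_mulVec, mulVec_mulVec,
    add_sub_cancel_right]

end Resolvent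

section Limits

lemma tendsto_sub_smul_of_continuousAt {E : Type*} [TopologicalSpace E] [AddCommGroup E]
    [Module ℂ E] [ContinuousSMul ℂ E] {F : ℂ → E} {μ : ℂ} (hF : ContinuousAt F μ) :
    Tendsto (fun s => (s - μ) • F s) (𝓝[≠] μ) (𝓝 0) := by
  have hcont : ContinuousAt (fun s => (s - μ) • F s) μ := by fun_prop
  simpa using hcont.tendsto.mono_left nhdsWithin_le_nhds

lemma tendsto_mul_dotProduct_mulVec {α m : Type*} [Fintype m] {l : Filter α} {f : α → ℂ}
    {F : α → Matrix m m ℂ} {K : Matrix m m ℂ} (hF : Tendsto (fun s => f s • F s) l (𝓝 K))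
    (u v : m → ℂ) : Tendsto (fun s => f s * (u ⬝ᵥ F s *ᵥ v)) l (𝓝 (u ⬝ᵥ K *ᵥ v)) := by
  have hcont : Continuous fun X : Matrix m m ℂ => u ⬝ᵥ X *ᵥ v := by fun_prop
  simpa [Function.comp_def, smul_mulVec, dotProduct_smul] using (hcont.tendsto K).comp hF

end Limits

section TransferFunction

variable {n m : ℕ} {A : Matrix (Fin n) (Fin n) ℝ} {B : Matrix (Fin n) (Fin m) ℝ}
  {C : Matrix (Fin m) (Fin n) ℝ} {D : Matrix (Fin m) (Fin m) ℝ} {s : ℂ}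

lemma tf_eq_resolvent (A : Matrix (Fin n) (Fin n) ℝ) (B : Matrix (Fin n) (Fin m) ℝ)
    (C : Matrix (Fin m) (Fin n) ℝ) (D : Matrix (Fin m) (Fin m) ℝ) (s : ℂ) :
    tf A B C D s = C.map Complex.ofReal * resolvent (A.map Complex.ofReal) s *
      B.map Complex.ofReal + D.map Complex.ofReal := by
  rw [tf, resolvent, nonsing_inv_eq_ringInverse, Algebra.algebraMap_eq_smul_one]

lemma tf_mulVec (A : Matrix (Fin n) (Fin n) ℝ) (B : Matrix (Fin n) (Fin m) ℝ)
    (C : Matrix (Fin m) (Fin n) ℝ) (D : Matrix (Fin m) (Fin m) ℝ) (s : ℂ) (u : Fin m → ℂ) :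
    tf A B C D s *ᵥ u = C.map Complex.ofReal *ᵥ
      (resolvent (A.map Complex.ofReal) s *ᵥ (B.map Complex.ofReal *ᵥ u)) +
        D.map Complex.ofReal *ᵥ u := by
  simp only [tf_eq_resolvent, add_mulVec, mulVec_mulVec, Matrix.mul_assoc]

lemma tf_zero (hA : A.det ≠ 0) : tf A B C D 0 = (D - C * A⁻¹ * B).map Complex.ofReal := by
  have hneg : (-A.map Complex.ofReal)⁻¹ = -(A.map Complex.ofReal)⁻¹ := by
    have hdet : (A.map Complex.ofReal).det ≠ 0 := by
      rwa [det_map_ofReal, Complex.ofReal_ne_zero]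
    exact inv_eq_left_inv (by rw [neg_mul_neg, nonsing_inv_mul _ hdet.isUnit])
  rw [tf, zero_smul, zero_sub, hneg, map_ofReal_sub, map_ofReal_mul, map_ofReal_mul,
    map_ofReal_inv hA]
  rw [Matrix.mul_neg, Matrix.neg_mul, neg_add_eq_sub]

lemma tf_star (A : Matrix (Fin n) (Fin n) ℝ) (B : Matrix (Fin n) (Fin m) ℝ)
    (C : Matrix (Fin m) (Fin n) ℝ) (D : Matrix (Fin m) (Fin m) ℝ) (s : ℂ) :
    tf A B C D (star s) = (tf A B C D s)ᴴᵀ := by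
  simp only [tf, conjTranspose_add, transpose_add, conjTranspose_mul, transpose_mul,
    conjTranspose_nonsing_inv, transpose_nonsing_inv, conjTranspose_sub, transpose_sub,
    conjTranspose_smul, transpose_smul, conjTranspose_one, transpose_one, Matrix.mul_assoc,
    conjTranspose_transpose_map_ofReal]

lemma tendsto_tf_cobounded (A : Matrix (Fin n) (Fin n) ℝ) (B : Matrix (Fin n) (Fin m) ℝ)
    (C : Matrix (Fin m) (Fin n) ℝ) (D : Matrix (Fin m) (Fin m) ℝ) :
    Tendsto (tf A B C D) (Bornology.cobounded ℂ) (𝓝 (D.map Complex.ofReal)) := by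
  have hcont : Continuous fun X : Matrix (Fin n) (Fin n) ℂ =>
      C.map Complex.ofReal * X * B.map Complex.ofReal + D.map Complex.ofReal := by fun_prop
  have := (hcont.tendsto 0).comp (tendsto_resolvent_cobounded (A.map Complex.ofReal))
  simpa [Function.comp_def, ← tf_eq_resolvent] using this

lemma continuousAt_tf (hs : s ∉ eigs A) : ContinuousAt (tf A B C D) s := by
  have hres := continuousAt_resolvent hs
  rw [funext (tf_eq_resolvent A B C D)]
  fun_prop

lemma differentiableAt_dotProduct_tf_mulVec (hs : s ∉ eigs A) (u v : Fin m → ℂ) :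
    DifferentiableAt ℂ (fun s => u ⬝ᵥ tf A B C D s *ᵥ v) s := by
  have hres := differentiableAt_resolvent_apply hs
  simp only [tf_eq_resolvent, dotProduct, mulVec, Matrix.add_apply, mul_apply]
  fun_prop

lemma smul_tf_strictlyProper (hs : s ∉ eigs A) :
    s • tf A B C 0 s = tf A B (C * A) (C * B) s := by
  rw [tf_eq_resolvent, tf_eq_resolvent, Matrix.map_zero _ Complex.ofReal_zero, add_zero,
    map_ofReal_mul, map_ofReal_mul, ← Matrix.smul_mul, ← Matrix.mul_smul,
    smul_resolvent_eq_one_add_mul_resolvent hs]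
  simp only [Matrix.mul_add, Matrix.add_mul, Matrix.mul_one, Matrix.mul_assoc]
  exact add_comm _ _

lemma smul_tf_eq_tf_zero_sub_tf (hA : A.det ≠ 0) (hs : s ∉ eigs A) :
    s • tf A B (-(C * A⁻¹)) 0 s = tf A B C D 0 - tf A B C D s := by
  rw [smul_tf_strictlyProper hs, tf_zero hA, tf_eq_resolvent, tf_eq_resolvent, Matrix.neg_mul,
    Matrix.neg_mul, Matrix.mul_assoc C, nonsing_inv_mul _ hA.isUnit, Matrix.mul_one,
    Matrix.map_neg _ Complex.ofReal_neg, Matrix.map_neg _ Complex.ofReal_neg, map_ofReal_sub,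
    Matrix.neg_mul, Matrix.neg_mul]
  abel

end TransferFunction

/-- The transfer function of `(A, B, C, D)` is positive real: its Hermitian part is positive
semidefinite on the open right half-plane. -/
def IsPositiveReal {n m : ℕ} (A : Matrix (Fin n) (Fin n) ℝ) (B : Matrix (Fin n) (Fin m) ℝ)
    (C : Matrix (Fin m) (Fin n) ℝ) (D : Matrix (Fin m) (Fin m) ℝ) : Prop :=
  ∀ s : ℂ, 0 < s.re → (tf A B C D s + (tf A B C D s)ᴴ).PosSemidef

/-- The matrix function `F` has a positive semidefinite residue at `μ`. For a meromorphic `F` the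
existence of the limit says that the pole at `μ` is at most simple; where `F` is continuous the
residue is `0`. -/
def HasPosSemidefResidue {m : Type*} (F : ℂ → Matrix m m ℂ) (μ : ℂ) : Prop :=
  ∃ K, Tendsto (fun s => (s - μ) • F s) (𝓝[≠] μ) (𝓝 K) ∧ K.PosSemidef

section PositiveReal

lemma hasPosSemidefResidue_of_continuousAt {m : Type*} {F : ℂ → Matrix m m ℂ} {μ : ℂ}
    (hF : ContinuousAt F μ) : HasPosSemidefResidue F μ :=
  ⟨0, tendsto_sub_smul_of_continuousAt hF, .zero⟩

variable {n m : ℕ} {A : Matrix (Fin n) (Fin n) ℝ} {B : Matrix (Fin n) (Fin m) ℝ}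
  {C : Matrix (Fin m) (Fin n) ℝ} {D : Matrix (Fin m) (Fin m) ℝ}

lemma hasPosSemidefResidue_tf_star {μ : ℂ} (h : HasPosSemidefResidue (tf A B C D) μ) :
    HasPosSemidefResidue (tf A B C D) (star μ) := by
  obtain ⟨K, hK, hpos⟩ := h
  have hstar : Tendsto star (𝓝[≠] (star μ)) (𝓝[≠] μ) := by
    have : Tendsto star (𝓝 (star μ)) (𝓝 μ) := by
      simpa using (continuous_star (R := ℂ)).tendsto (star μ)
    exact this.inf
      (tendsto_principal_principal.2 fun s hs => star_eq_iff_star_eq.not.2 (Ne.symm hs))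
  have hconj : Continuous fun X : Matrix (Fin m) (Fin m) ℂ => Xᴴᵀ := by fun_prop
  refine ⟨Kᵀ, ?_, hpos.transpose⟩
  rw [← hpos.isHermitian.eq]
  refine ((hconj.tendsto K).comp (hK.comp hstar)).congr fun s => ?_
  rw [Function.comp_apply, Function.comp_apply, conjTranspose_smul, transpose_smul, ← tf_star,
    star_star, star_sub, star_star]

lemma posSemidef_tf_star {s : ℂ} (h : (tf A B C D s + (tf A B C D s)ᴴ).PosSemidef) :
    (tf A B C D (star s) + (tf A B C D (star s))ᴴ).PosSemidef := by
  rw [tf_star, conjTranspose_transpose_eq_transpose_conjTranspose, conjTranspose_conjTranspose,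
    add_comm]
  exact h.transpose

theorem isPositiveReal_of_imaginary_axis (hstable : ∀ μ ∈ eigs A, μ.re ≤ 0)
    (hfreq : ∀ ω : ℝ, 0 < ω → Complex.I * ω ∉ eigs A →
      (tf A B C D (Complex.I * ω) + (tf A B C D (Complex.I * ω))ᴴ).PosSemidef)
    (hres : ∀ ω : ℝ, 0 ≤ ω → Complex.I * ω ∈ eigs A →
      HasPosSemidefResidue (tf A B C D) (Complex.I * ω)) :
    IsPositiveReal A B C D := by
  have star_I_mul (ω : ℝ) : star (Complex.I * (-ω : ℝ)) = Complex.I * ω := by simp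
  have hres' (ω : ℝ) : HasPosSemidefResidue (tf A B C D) (Complex.I * ω) := by
    by_cases hω : Complex.I * ω ∈ eigs A
    · rcases le_total 0 ω with h | h
      · exact hres ω h hω
      · rw [← star_I_mul] at hω ⊢
        refine hasPosSemidefResidue_tf_star (hres (-ω) (neg_nonneg.2 h) ?_)
        simpa only [star_star] using star_mem_eigs hω
    · exact hasPosSemidefResidue_of_continuousAt (continuousAt_tf hω)
  have hfreq' (ω : ℝ) (hne : ω ≠ 0) (hω : Complex.I * ω ∉ eigs A) :
      (tf A B C D (Complex.I * ω) + (tf A B C D (Complex.I * ω))ᴴ).PosSemidef := by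
    rcases hne.lt_or_gt with h | h
    · rw [← star_I_mul] at hω ⊢
      exact posSemidef_tf_star (hfreq (-ω) (neg_pos.2 h) (mt star_mem_eigs hω))
    · exact hfreq ω h hω
  refine fun s hs => posSemidef_add_conjTranspose_iff.2 fun u => ?_
  refine re_nonneg_of_imaginary_axis (g := fun s => star u ⬝ᵥ tf A B C D s *ᵥ u)
    (L := star u ⬝ᵥ D.map Complex.ofReal *ᵥ u)
    (fun s hs => ?_) ?_ (fun ω => ?_) ?_ ?_ hs
  · have hs' : s ∉ eigs A := fun h => (hstable s h).not_gt hs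
    exact (differentiableAt_dotProduct_tf_mulVec hs' _ _).differentiableWithinAt
  · exact (finite_eigs A).eventually_cofinite_notMem.mono fun s hs =>
      differentiableAt_dotProduct_tf_mulVec hs _ _
  · obtain ⟨K, hK, hpos⟩ := hres' ω
    obtain ⟨hnonneg, hreal⟩ := Complex.nonneg_iff.1 (hpos.dotProduct_mulVec_nonneg u)
    refine ⟨(star u ⬝ᵥ K *ᵥ u).re, hnonneg, ?_⟩
    convert tendsto_mul_dotProduct_mulVec hK (star u) u
    exact Complex.ext rfl hreal
  · filter_upwards [eventually_I_mul_ofReal_notMem_eigs A,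
      (Set.finite_singleton 0).eventually_cofinite_notMem] with ω hω hne
    exact posSemidef_add_conjTranspose_iff.1 (hfreq' ω hne hω) u
  · have hcont : Continuous fun X : Matrix (Fin m) (Fin m) ℂ => star u ⬝ᵥ X *ᵥ u := by fun_prop
    exact (hcont.tendsto _).comp (tendsto_tf_cobounded A B C D)

end PositiveReal

/-- The controllability matrix `[B, AB, …, Aⁿ⁻¹B]`; column `(k, j)` is the `j`-th column
of `AᵏB`. -/
def controllabilityMatrix {n m : ℕ} (A : Matrix (Fin n) (Fin n) ℝ) (B : Matrix (Fin n) (Fin m) ℝ) :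
    Matrix (Fin n) (Fin n × Fin m) ℝ :=
  Matrix.of fun i p => (A ^ (p.1 : ℕ) * B) i p.2

/-- The observability matrix `[Cᵀ, AᵀCᵀ, …, (Aᵀ)ⁿ⁻¹Cᵀ]ᵀ`; row `(k, j)` is the `j`-th row
of `CAᵏ`. -/
def observabilityMatrix {n m : ℕ} (A : Matrix (Fin n) (Fin n) ℝ) (C : Matrix (Fin m) (Fin n) ℝ) :
    Matrix (Fin n × Fin m) (Fin n) ℝ :=
  Matrix.of fun p i => (C * A ^ (p.1 : ℕ)) p.2 i

section Minimality

lemma exists_map_ofReal_mul_eq_one {k l : Type*} [Fintype k] [DecidableEq k] [Fintype l]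
    {M : Matrix k l ℝ} (hM : M.rank = Fintype.card k) :
    ∃ N : Matrix l k ℂ, M.map Complex.ofReal * N = 1 := by
  have hrange : LinearMap.range M.mulVecLin = ⊤ :=
    Submodule.eq_top_of_finrank_eq (by rw [← rank, hM, Module.finrank_fintype_fun_eq_card])
  obtain ⟨N, hN⟩ := mulVec_surjective_iff_exists_right_inverse.1 (LinearMap.range_eq_top.1 hrange)
  refine ⟨N.map Complex.ofReal, ?_⟩
  rw [← map_ofReal_mul, hN]
  exact Matrix.map_one _ Complex.ofReal_zero Complex.ofReal_one

variable {n m : ℕ} {A : Matrix (Fin n) (Fin n) ℝ} {B : Matrix (Fin n) (Fin m) ℝ}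
  {C : Matrix (Fin m) (Fin n) ℝ}

lemma eq_top_of_controllable (hctrl : (controllabilityMatrix A B).rank = n)
    {P : Submodule ℂ (Fin n → ℂ)} (hB : ∀ w, B.map Complex.ofReal *ᵥ w ∈ P)
    (hA : ∀ x ∈ P, A.map Complex.ofReal *ᵥ x ∈ P) : P = ⊤ := by
  obtain ⟨N, hN⟩ := exists_map_ofReal_mul_eq_one (hctrl.trans (Fintype.card_fin n).symm)
  have hpow (k : ℕ) (w) : A.map Complex.ofReal ^ k *ᵥ (B.map Complex.ofReal *ᵥ w) ∈ P := by
    induction k with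
    | zero => simpa using hB w
    | succ k ih => simpa only [pow_succ', ← mulVec_mulVec] using hA _ ih
  have hcol (p) : ((controllabilityMatrix A B).map Complex.ofReal).col p ∈ P := by
    have := hpow p.1 (Pi.single p.2 1)
    rwa [mulVec_mulVec, ← map_ofReal_pow, ← map_ofReal_mul, mulVec_single_one] at this
  refine Submodule.eq_top_iff'.2 fun x => ?_
  rw [← one_mulVec x, ← hN, ← mulVec_mulVec, mulVec_eq_sum]
  simp only [op_smul_eq_smul]
  exact P.sum_mem fun p _ => P.smul_mem _ (hcol p)

lemma eq_zero_of_observable (hobs : (observabilityMatrix A C).rank = n) {x : Fin n → ℂ} {μ : ℂ}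
    (hA : A.map Complex.ofReal *ᵥ x = μ • x) (hC : C.map Complex.ofReal *ᵥ x = 0) : x = 0 := by
  have hrank : (observabilityMatrix A C)ᵀ.rank = Fintype.card (Fin n) := by
    rw [rank_transpose, hobs, Fintype.card_fin]
  obtain ⟨N, hN⟩ := exists_map_ofReal_mul_eq_one hrank
  have hpow (k : ℕ) : A.map Complex.ofReal ^ k *ᵥ x = μ ^ k • x := by
    induction k with
    | zero => simp
    | succ k ih => rw [pow_succ', ← mulVec_mulVec, ih, mulVec_smul, hA, smul_smul, pow_succ]
  have hker : (observabilityMatrix A C).map Complex.ofReal *ᵥ x = 0 := by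
    ext p
    have : (C * A ^ (p.1 : ℕ)).map Complex.ofReal *ᵥ x = 0 := by
      rw [map_ofReal_mul, map_ofReal_pow, ← mulVec_mulVec, hpow, mulVec_smul, hC, smul_zero]
    exact congrFun this p.2
  rw [← one_mulVec x, ← transpose_one, ← hN, transpose_mul, ← transpose_map, transpose_transpose,
    ← mulVec_mulVec, hker, mulVec_zero]

end Minimality

section PoleExpansion

variable {n m : ℕ} {A : Matrix (Fin n) (Fin n) ℝ} {B : Matrix (Fin n) (Fin m) ℝ}
  {C : Matrix (Fin m) (Fin n) ℝ} {D : Matrix (Fin m) (Fin m) ℝ} {μ : ℂ}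

lemma tendsto_mul_dotProduct_resolvent_mulVec (hctrl : (controllabilityMatrix A B).rank = n)
    {f : ℂ → ℂ} (hf : Tendsto f (𝓝[≠] μ) (𝓝 0)) (φ : Fin n → ℂ)
    (hB : ∀ w, Tendsto (fun s => f s * (φ ⬝ᵥ resolvent (A.map Complex.ofReal) s *ᵥ
      (B.map Complex.ofReal *ᵥ w))) (𝓝[≠] μ) (𝓝 0)) (x : Fin n → ℂ) :
    Tendsto (fun s => f s * (φ ⬝ᵥ resolvent (A.map Complex.ofReal) s *ᵥ x)) (𝓝[≠] μ) (𝓝 0) := by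
  let P : Submodule ℂ (Fin n → ℂ) :=
    { carrier := {x | Tendsto (fun s => f s * (φ ⬝ᵥ resolvent (A.map Complex.ofReal) s *ᵥ x))
        (𝓝[≠] μ) (𝓝 0)}
      add_mem' := fun {x y} hx hy => by
        simpa [mulVec_add, dotProduct_add, mul_add] using hx.add hy
      zero_mem' := by simp
      smul_mem' := fun c x hx => by
        simpa [mulVec_smul, dotProduct_smul, mul_left_comm] using hx.const_mul c }
  have hA (x) (hx : x ∈ P) : A.map Complex.ofReal *ᵥ x ∈ P := by
    have hid : Tendsto id (𝓝[≠] μ) (𝓝 μ) := nhdsWithin_le_nhds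
    have hlim := (hid.mul hx).sub (hf.mul_const (φ ⬝ᵥ x))
    rw [mul_zero, zero_mul, sub_zero] at hlim
    refine hlim.congr' ?_
    filter_upwards [eventually_notMem_eigs A μ] with s hs
    have := congrArg (φ ⬝ᵥ · *ᵥ x) (smul_resolvent_eq_one_add_resolvent_mul hs)
    simp only [smul_mulVec, add_mulVec, one_mulVec, ← mulVec_mulVec, dotProduct_smul,
      dotProduct_add, smul_eq_mul] at this
    rw [id, mul_left_comm, this]
    ring
  have htop : P = ⊤ := eq_top_of_controllable hctrl hB hA
  exact Submodule.eq_top_iff'.1 htop x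

lemma tendsto_mul_dotProduct_resolvent_of_tendsto_smul_tf
    (hctrl : (controllabilityMatrix A B).rank = n) {f : ℂ → ℂ} (hf : Tendsto f (𝓝[≠] μ) (𝓝 0))
    {K : Matrix (Fin m) (Fin m) ℂ}
    (hK : Tendsto (fun s => f s • tf A B C D s) (𝓝[≠] μ) (𝓝 K)) {u : Fin m → ℂ}
    (hu : u ᵥ* K = 0) (x : Fin n → ℂ) :
    Tendsto (fun s => f s * (u ⬝ᵥ C.map Complex.ofReal *ᵥ
      (resolvent (A.map Complex.ofReal) s *ᵥ x))) (𝓝[≠] μ) (𝓝 0) := by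
  simp only [dotProduct_mulVec u]
  refine tendsto_mul_dotProduct_resolvent_mulVec hctrl hf _ (fun w => ?_) x
  have hlim := (tendsto_mul_dotProduct_mulVec hK u w).sub
    (hf.mul_const (u ⬝ᵥ D.map Complex.ofReal *ᵥ w))
  rw [dotProduct_mulVec u K, hu, zero_dotProduct, zero_mul, sub_zero] at hlim
  refine hlim.congr fun s => ?_
  rw [tf_mulVec, dotProduct_add, dotProduct_mulVec u (C.map _)]
  ring

lemma dotProduct_tf_mulVec_eq_sub {x : Fin n → ℂ} {u : Fin m → ℂ} {s : ℂ} (hs : s ∉ eigs A)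
    (hx : μ • x - A.map Complex.ofReal *ᵥ x = B.map Complex.ofReal *ᵥ u) (v : Fin m → ℂ) :
    v ⬝ᵥ tf A B C D s *ᵥ u = v ⬝ᵥ (C.map Complex.ofReal *ᵥ x + D.map Complex.ofReal *ᵥ u) -
      (s - μ) * (v ⬝ᵥ C.map Complex.ofReal *ᵥ (resolvent (A.map Complex.ofReal) s *ᵥ x)) := by
  have hres : s • resolvent (A.map Complex.ofReal) s *ᵥ x =
      x + resolvent (A.map Complex.ofReal) s *ᵥ (A.map Complex.ofReal *ᵥ x) := by
    rw [← smul_mulVec, smul_resolvent_eq_one_add_resolvent_mul hs, add_mulVec, one_mulVec,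
      mulVec_mulVec]
  have hBu : resolvent (A.map Complex.ofReal) s *ᵥ (B.map Complex.ofReal *ᵥ u) =
      x - (s - μ) • resolvent (A.map Complex.ofReal) s *ᵥ x := by
    rw [← hx, mulVec_sub, mulVec_smul, sub_smul, hres]
    abel
  rw [tf_mulVec, hBu, mulVec_sub, mulVec_smul]
  simp only [dotProduct_add, dotProduct_sub, dotProduct_smul, smul_eq_mul]
  ring

lemma star_vecMul_residue_eq_zero (hctrl : (controllabilityMatrix A B).rank = n) {c : ℂ}
    {K : Matrix (Fin m) (Fin m) ℂ} (hpos : K.PosSemidef)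
    (hK : Tendsto (fun s => ((s - μ) * c) • tf A B C D s) (𝓝[≠] μ) (𝓝 K)) {x : Fin n → ℂ}
    {u : Fin m → ℂ} (hx : μ • x - A.map Complex.ofReal *ᵥ x = B.map Complex.ofReal *ᵥ u) :
    star u ᵥ* K = 0 := by
  have hsub : Tendsto (fun s => s - μ) (𝓝[≠] μ) (𝓝 0) :=
    tendsto_sub_nhds_zero_iff.2 nhdsWithin_le_nhds
  have hf : Tendsto (fun s => (s - μ) * c) (𝓝[≠] μ) (𝓝 0) := by simpa using hsub.mul_const c
  have hdouble : Tendsto (fun s => ((s - μ) * ((s - μ) * c)) • tf A B C D s) (𝓝[≠] μ) (𝓝 0) := by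
    simpa only [smul_smul, zero_smul] using hsub.smul hK
  have hpolar := tendsto_mul_dotProduct_resolvent_of_tendsto_smul_tf hctrl
    (by simpa using hsub.mul hf) hdouble (vecMul_zero (star u)) x
  have hzero : Tendsto (fun s => (s - μ) * c * (star u ⬝ᵥ tf A B C D s *ᵥ u)) (𝓝[≠] μ) (𝓝 0) := by
    have hlim := (hf.mul_const (star u ⬝ᵥ (C.map Complex.ofReal *ᵥ x +
      D.map Complex.ofReal *ᵥ u))).sub hpolar
    rw [zero_mul, sub_zero] at hlim
    refine hlim.congr' ((eventually_notMem_eigs A μ).mono fun s hs => ?_)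
    simp only [dotProduct_tf_mulVec_eq_sub hs hx]
    ring
  have hKu : K *ᵥ u = 0 := (hpos.dotProduct_mulVec_zero_iff u).1
    (tendsto_nhds_unique (tendsto_mul_dotProduct_mulVec hK (star u) u) hzero)
  rw [← hpos.isHermitian.eq, ← star_mulVec, hKu, star_zero]

theorem tendsto_dotProduct_tf_mulVec_of_hasPosSemidefResidue
    (hctrl : (controllabilityMatrix A B).rank = n) {c : ℂ} (hc : c ≠ 0)
    (hres : HasPosSemidefResidue (fun s => c • tf A B C D s) μ) {x : Fin n → ℂ} {u : Fin m → ℂ}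
    (hx : μ • x - A.map Complex.ofReal *ᵥ x = B.map Complex.ofReal *ᵥ u) :
    Tendsto (fun s => star u ⬝ᵥ tf A B C D s *ᵥ u) (𝓝[≠] μ)
      (𝓝 (star u ⬝ᵥ (C.map Complex.ofReal *ᵥ x + D.map Complex.ofReal *ᵥ u))) := by
  obtain ⟨K, hK, hpos⟩ := hres
  simp only [smul_smul] at hK
  have hsub : Tendsto (fun s => s - μ) (𝓝[≠] μ) (𝓝 0) :=
    tendsto_sub_nhds_zero_iff.2 nhdsWithin_le_nhds
  have hf : Tendsto (fun s => (s - μ) * c) (𝓝[≠] μ) (𝓝 0) := by simpa using hsub.mul_const c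
  have hpolar := tendsto_mul_dotProduct_resolvent_of_tendsto_smul_tf hctrl hf hK
    (star_vecMul_residue_eq_zero hctrl hpos hK hx) x
  have hlim := (hpolar.const_mul c⁻¹).const_sub
    (star u ⬝ᵥ (C.map Complex.ofReal *ᵥ x + D.map Complex.ofReal *ᵥ u))
  rw [mul_zero, sub_zero] at hlim
  refine hlim.congr' ((eventually_notMem_eigs A μ).mono fun s hs => ?_)
  simp only [dotProduct_tf_mulVec_eq_sub hs hx]
  field_simp

end PoleExpansion

/-- The strictly proper system `(A, B, C, 0)` is negative imaginary in the extended sense allowing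
a simple pole at the origin. As nothing is asked of the sign of the residue at the origin, this is
slightly weaker than the usual notion. -/
structure IsExtendedNI {n m : ℕ} (A : Matrix (Fin n) (Fin n) ℝ) (B : Matrix (Fin n) (Fin m) ℝ)
    (C : Matrix (Fin m) (Fin n) ℝ) : Prop where
  stable : ∀ μ ∈ eigs A, μ.re ≤ 0
  origin : 0 ∈ eigs A → ∃ K, Tendsto (fun s => s • tf A B C 0 s) (𝓝[≠] 0) (𝓝 K)
  frequency : ∀ ω : ℝ, 0 < ω → Complex.I * ω ∉ eigs A →
    (Complex.I • (tf A B C 0 (Complex.I * ω) - (tf A B C 0 (Complex.I * ω))ᴴ)).PosSemidef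
  residue : ∀ ω : ℝ, 0 < ω → Complex.I * ω ∈ eigs A →
    HasPosSemidefResidue (fun s => Complex.I • tf A B C 0 s) (Complex.I * ω)

namespace IsExtendedNI

variable {n m : ℕ} {A : Matrix (Fin n) (Fin n) ℝ} {B : Matrix (Fin n) (Fin m) ℝ}
  {C : Matrix (Fin m) (Fin n) ℝ}

lemma hasPosSemidefResidue_I_smul (h : IsExtendedNI A B C) {μ : ℂ} (hμ : μ ≠ 0) (hre : 0 ≤ μ.re)
    (him : 0 ≤ μ.im) : HasPosSemidefResidue (fun s => Complex.I • tf A B C 0 s) μ := by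
  by_cases hA : μ ∈ eigs A
  · have hre0 : μ.re = 0 := (h.stable μ hA).antisymm hre
    have hIω : Complex.I * μ.im = μ := Complex.ext (by simp [hre0]) (by simp)
    have hpos : 0 < μ.im := him.lt_of_ne fun him0 => hμ (Complex.ext hre0 him0.symm)
    rw [← hIω] at hA ⊢
    exact h.residue μ.im hpos hA
  · exact hasPosSemidefResidue_of_continuousAt ((continuousAt_tf hA).const_smul Complex.I)

lemma hasPosSemidefResidue_smul (h : IsExtendedNI A B C) {ω : ℝ} (hω : 0 ≤ ω)
    (hA : Complex.I * ω ∈ eigs A) :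
    HasPosSemidefResidue (fun s => s • tf A B C 0 s) (Complex.I * ω) := by
  have hid : Tendsto id (𝓝[≠] (Complex.I * ω)) (𝓝 (Complex.I * ω)) := nhdsWithin_le_nhds
  rcases hω.eq_or_lt with rfl | hω
  · rw [Complex.ofReal_zero, mul_zero] at hA hid ⊢
    obtain ⟨K, hK⟩ := h.origin hA
    exact ⟨0, by simpa using hid.smul hK, .zero⟩
  · obtain ⟨K, hK, hpos⟩ := h.residue ω hω hA
    refine ⟨(ω : ℂ) • K, ?_, hpos.smul (Complex.zero_le_real.2 hω.le)⟩
    have hlim := (hid.mul_const Complex.I⁻¹).smul hK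
    rw [mul_right_comm, mul_inv_cancel₀ Complex.I_ne_zero, one_mul] at hlim
    refine hlim.congr fun s => ?_
    rw [smul_comm (s - _) Complex.I, smul_smul, id, inv_mul_cancel_right₀ Complex.I_ne_zero,
      smul_comm]

theorem isPositiveReal (h : IsExtendedNI A B C) : IsPositiveReal A B (C * A) (C * B) := by
  refine isPositiveReal_of_imaginary_axis h.stable (fun ω hω hA => ?_) fun ω hω hA => ?_
  · have hfreq := (h.frequency ω hω hA).smul (Complex.zero_le_real.2 hω.le)
    rw [← smul_tf_strictlyProper hA, mul_smul, smul_comm, conjTranspose_smul, Complex.star_def,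
      Complex.conj_ofReal, ← smul_add]
    rwa [I_smul_sub_conjTranspose] at hfreq
  · obtain ⟨K, hK, hpos⟩ := h.hasPosSemidefResidue_smul hω hA
    refine ⟨K, hK.congr' ((eventually_notMem_eigs A _).mono fun s hs => ?_), hpos⟩
    simp only [smul_tf_strictlyProper hs]

theorem re_conj_mul_dotProduct_nonneg (h : IsExtendedNI A B C)
    (hctrl : (controllabilityMatrix A B).rank = n) {μ : ℂ} (hμ : μ ≠ 0) (hre : 0 ≤ μ.re)
    (him : 0 ≤ μ.im) {x : Fin n → ℂ} {u : Fin m → ℂ}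
    (hx : μ • x - A.map Complex.ofReal *ᵥ x = B.map Complex.ofReal *ᵥ u) :
    0 ≤ (star μ * (star (C.map Complex.ofReal *ᵥ x) ⬝ᵥ u)).re := by
  have hlim := tendsto_dotProduct_tf_mulVec_of_hasPosSemidefResidue hctrl Complex.I_ne_zero
    (h.hasPosSemidefResidue_I_smul hμ hre him) hx
  rw [Matrix.map_zero _ Complex.ofReal_zero, zero_mulVec, add_zero] at hlim
  have hpath : Tendsto (fun t : ℝ => μ + t) (𝓝[>] 0) (𝓝[≠] μ) := by
    refine tendsto_nhdsWithin_iff.2 ⟨?_, ?_⟩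
    · exact (Continuous.tendsto' (by fun_prop) _ _ (by simp)).mono_left nhdsWithin_le_nhds
    · filter_upwards [self_mem_nhdsWithin] with t (ht : 0 < t)
      simpa using ht.ne'
  have hmul : Tendsto (fun s => s * (star u ⬝ᵥ tf A B C 0 s *ᵥ u)) (𝓝[≠] μ)
      (𝓝 (μ * (star u ⬝ᵥ C.map Complex.ofReal *ᵥ x))) :=
    Tendsto.mul nhdsWithin_le_nhds hlim
  have hconj : star μ * (star (C.map Complex.ofReal *ᵥ x) ⬝ᵥ u) =
      star (μ * (star u ⬝ᵥ C.map Complex.ofReal *ᵥ x)) := by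
    rw [star_mul', ← star_dotProduct]
  rw [hconj, Complex.star_def, Complex.conj_re]
  refine ge_of_tendsto ((Complex.continuous_re.tendsto _).comp (hmul.comp hpath)) ?_
  filter_upwards [self_mem_nhdsWithin] with t (ht : 0 < t)
  have hs : 0 < (μ + t).re := by simpa using add_pos_of_nonneg_of_pos hre ht
  have hA : μ + t ∉ eigs A := fun hA => (h.stable _ hA).not_gt hs
  have := posSemidef_add_conjTranspose_iff.1 (h.isPositiveReal _ hs) u
  rwa [← smul_tf_strictlyProper hA, smul_mulVec, dotProduct_smul, smul_eq_mul] at this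

end IsExtendedNI

namespace IsSNI

variable {n m : ℕ} {A : Matrix (Fin n) (Fin n) ℝ} {B : Matrix (Fin n) (Fin m) ℝ}
  {C : Matrix (Fin m) (Fin n) ℝ} {D : Matrix (Fin m) (Fin m) ℝ}

lemma notMem_eigs (h : IsSNI A B C D) {s : ℂ} (hs : 0 ≤ s.re) : s ∉ eigs A :=
  fun hA => (h.1 s hA).not_ge hs

lemma det_ne_zero (h : IsSNI A B C D) : A.det ≠ 0 :=
  mt zero_mem_eigs_iff.2 (h.notMem_eigs le_rfl)

lemma im_dotProduct_tf_mulVec_neg (h : IsSNI A B C D) {ω : ℝ} (hω : 0 < ω) {v : Fin m → ℂ}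
    (hv : v ≠ 0) : (star v ⬝ᵥ tf A B C D (Complex.I * ω) *ᵥ v).im < 0 := by
  have hpos := h.2 ω hω
  rw [I_smul_sub_conjTranspose] at hpos
  simpa [smul_mulVec, dotProduct_smul] using re_star_dotProduct_mulVec_pos hpos hv

lemma im_dotProduct_tf_mulVec_nonpos (h : IsSNI A B C D) {ω : ℝ} (hω : 0 < ω) (v : Fin m → ℂ) :
    (star v ⬝ᵥ tf A B C D (Complex.I * ω) *ᵥ v).im ≤ 0 := by
  rcases eq_or_ne v 0 with rfl | hv
  · simp
  · exact (h.im_dotProduct_tf_mulVec_neg hω hv).le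

lemma im_dotProduct_tf_zero_mulVec (h : IsSNI A B C D) (v : Fin m → ℂ) :
    (star v ⬝ᵥ tf A B C D 0 *ᵥ v).im = 0 := by
  have hle (v : Fin m → ℂ) : (star v ⬝ᵥ tf A B C D 0 *ᵥ v).im ≤ 0 := by
    have hcont : Continuous fun X : Matrix (Fin m) (Fin m) ℂ => (star v ⬝ᵥ X *ᵥ v).im := by
      fun_prop
    have hpath : Tendsto (fun ω : ℝ => Complex.I * ω) (𝓝[>] 0) (𝓝 0) :=
      (Continuous.tendsto' (by fun_prop) _ _ (by simp)).mono_left nhdsWithin_le_nhds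
    have htf : Tendsto (tf A B C D) (𝓝 0) (𝓝 (tf A B C D 0)) :=
      continuousAt_tf (h.notMem_eigs le_rfl)
    refine le_of_tendsto ((hcont.tendsto _).comp (htf.comp hpath)) ?_
    filter_upwards [self_mem_nhdsWithin] with ω hω using h.im_dotProduct_tf_mulVec_nonpos hω v
  refine (hle v).antisymm ?_
  -- `R(0)` is real, so conjugating `v` conjugates the quadratic form.
  have hconj : star (star v) ⬝ᵥ tf A B C D 0 *ᵥ star v = star (star v ⬝ᵥ tf A B C D 0 *ᵥ v) := by
    rw [tf_zero h.det_ne_zero, star_map_ofReal_mulVec, star_dotProduct_star, dotProduct_comm]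
  have := hle (star v)
  rwa [hconj, Complex.star_def, Complex.conj_im, neg_nonpos] at this

lemma dotProduct_tf_mulVec_eq (h : IsSNI A B C D) {s : ℂ} (hs : 0 ≤ s.re) (v : Fin m → ℂ) :
    star v ⬝ᵥ tf A B C D s *ᵥ v = ((star v ⬝ᵥ tf A B C D 0 *ᵥ v).re : ℂ) -
      s * (star v ⬝ᵥ tf A B (-(C * A⁻¹)) 0 s *ᵥ v) := by
  have hzero : star v ⬝ᵥ tf A B C D 0 *ᵥ v = ((star v ⬝ᵥ tf A B C D 0 *ᵥ v).re : ℂ) :=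
    Complex.ext rfl (h.im_dotProduct_tf_zero_mulVec v)
  rw [← hzero, ← smul_eq_mul, ← dotProduct_smul, ← smul_mulVec,
    smul_tf_eq_tf_zero_sub_tf (D := D) h.det_ne_zero (h.notMem_eigs hs), sub_mulVec,
    dotProduct_sub, sub_sub_cancel]

theorem isPositiveReal (h : IsSNI A B C D) : IsPositiveReal A B (-(C * A⁻¹)) 0 := by
  refine isPositiveReal_of_imaginary_axis (fun μ hμ => (h.1 μ hμ).le) (fun ω hω _ => ?_)
    fun ω _ hA => absurd hA (h.notMem_eigs (by simp))
  refine posSemidef_add_conjTranspose_iff.2 fun v => ?_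
  have him := h.im_dotProduct_tf_mulVec_nonpos hω v
  rw [h.dotProduct_tf_mulVec_eq (by simp)] at him
  refine nonneg_of_mul_nonneg_right ?_ hω
  simpa using him

theorem re_conj_mul_dotProduct_tf_mulVec_neg (h : IsSNI A B C D)
    (hneg : (-(tf A B C D 0 + (tf A B C D 0)ᴴ)).PosDef) {s : ℂ} (hs : s ≠ 0) (hre : 0 ≤ s.re)
    (him : 0 ≤ s.im) {v : Fin m → ℂ} (hv : v ≠ 0) :
    (star s * (star v ⬝ᵥ tf A B C D s *ᵥ v)).re < 0 := by
  rcases hre.eq_or_lt with hre0 | hpos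
  · have hIω : Complex.I * s.im = s := Complex.ext (by simp [← hre0]) (by simp)
    have him_pos : 0 < s.im := him.lt_of_ne fun him0 => hs (Complex.ext hre0.symm him0.symm)
    have := h.im_dotProduct_tf_mulVec_neg him_pos hv
    rw [hIω] at this
    simpa [← hre0] using mul_neg_of_pos_of_neg him_pos this
  · have hzero : (star v ⬝ᵥ tf A B C D 0 *ᵥ v).re < 0 := by
      rw [neg_add, ← conjTranspose_neg] at hneg
      simpa [neg_mulVec] using re_star_dotProduct_mulVec_pos hneg hv
    have hG := posSemidef_add_conjTranspose_iff.1 (h.isPositiveReal s hpos) v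
    have hexpand : (star s * (star v ⬝ᵥ tf A B C D s *ᵥ v)).re =
        s.re * (star v ⬝ᵥ tf A B C D 0 *ᵥ v).re -
          Complex.normSq s * (star v ⬝ᵥ tf A B (-(C * A⁻¹)) 0 s *ᵥ v).re := by
      rw [h.dotProduct_tf_mulVec_eq hre, mul_sub, ← mul_assoc, Complex.star_def,
        ← Complex.normSq_eq_conj_mul_self]
      simp
    rw [hexpand]
    exact (sub_le_self _ (mul_nonneg (Complex.normSq_nonneg s) hG)).trans_lt
      (mul_neg_of_pos_of_neg hpos hzero)

end IsSNI

section ClosedLoop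

variable {n ns m : ℕ} {A : Matrix (Fin n) (Fin n) ℝ} {B : Matrix (Fin n) (Fin m) ℝ}
  {C : Matrix (Fin m) (Fin n) ℝ} {As : Matrix (Fin ns) (Fin ns) ℝ}
  {Bs : Matrix (Fin ns) (Fin m) ℝ} {Cs : Matrix (Fin m) (Fin ns) ℝ}
  {Ds : Matrix (Fin m) (Fin m) ℝ} {μ : ℂ}

lemma exists_feedback_eq_of_mem_eigs_closedLoop
    (hμ : μ ∈ eigs (fromBlocks (A + B * Ds * C) (B * Cs) (Bs * C) As)) (hAs : μ ∉ eigs As) :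
    ∃ x ≠ 0, μ • x - A.map Complex.ofReal *ᵥ x =
      B.map Complex.ofReal *ᵥ (tf As Bs Cs Ds μ *ᵥ (C.map Complex.ofReal *ᵥ x)) := by
  obtain ⟨z, hz, hmul⟩ := mem_eigs_iff.1 hμ
  obtain ⟨x, y, rfl⟩ : ∃ x y, z = Sum.elim x y := ⟨_, _, (Sum.elim_comp_inl_inr z).symm⟩
  have hsmul : μ • Sum.elim x y = Sum.elim (μ • x) (μ • y) := by ext (i | i) <;> rfl
  rw [fromBlocks_map, fromBlocks_mulVec, hsmul, Sum.elim_eq_iff, Sum.elim_comp_inl,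
    Sum.elim_comp_inr, map_ofReal_add] at hmul
  simp only [map_ofReal_mul, add_mulVec, ← mulVec_mulVec] at hmul
  obtain ⟨hplant, hcontroller⟩ := hmul
  have hy := eq_resolvent_mulVec hAs hcontroller
  refine ⟨x, ?_, ?_⟩
  · rintro rfl
    simp [hy] at hz
  · rw [tf_mulVec, ← hy, ← hplant, mulVec_add]
    abel

lemma ne_zero_of_feedback_eq (hAs : As.det ≠ 0)
    (hns : (A + B * (Ds - Cs * As⁻¹ * Bs) * C).det ≠ 0) {x : Fin n → ℂ} (hx : x ≠ 0)
    (hfeedback : μ • x - A.map Complex.ofReal *ᵥ x =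
      B.map Complex.ofReal *ᵥ (tf As Bs Cs Ds μ *ᵥ (C.map Complex.ofReal *ᵥ x))) : μ ≠ 0 := by
  rintro rfl
  refine hns (zero_mem_eigs_iff.1 (mem_eigs_iff.2 ⟨x, hx, ?_⟩))
  rw [map_ofReal_add, map_ofReal_mul, map_ofReal_mul, add_mulVec, ← mulVec_mulVec,
    ← mulVec_mulVec, ← tf_zero hAs, ← hfeedback]
  abel

end ClosedLoop

theorem ni_pole_at_origin_stability_general {n ns m : ℕ} {A : Matrix (Fin n) (Fin n) ℝ}
    {B : Matrix (Fin n) (Fin m) ℝ} {C : Matrix (Fin m) (Fin n) ℝ}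
    {As : Matrix (Fin ns) (Fin ns) ℝ} {Bs : Matrix (Fin ns) (Fin m) ℝ}
    {Cs : Matrix (Fin m) (Fin ns) ℝ} {Ds : Matrix (Fin m) (Fin m) ℝ}
    (hmin : IsMinimal A B C) (hR : IsExtendedNI A B C) (hS : IsSNI As Bs Cs Ds)
    (hneg : (-(tf As Bs Cs Ds 0 + (tf As Bs Cs Ds 0)ᴴ)).PosDef)
    (hns : (A + B * (Ds - Cs * As⁻¹ * Bs) * C).det ≠ 0) :
    IsHurwitz (fromBlocks (A + B * Ds * C) (B * Cs) (Bs * C) As) := by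
  refine isHurwitz_of_forall_im_nonneg fun μ hμ him => ?_
  by_contra! hre
  obtain ⟨x, hx, hfeedback⟩ := exists_feedback_eq_of_mem_eigs_closedLoop hμ (hS.notMem_eigs hre)
  have hμ0 : μ ≠ 0 := ne_zero_of_feedback_eq hS.det_ne_zero hns hx hfeedback
  have hv : C.map Complex.ofReal *ᵥ x ≠ 0 := by
    intro hv
    rw [hv, mulVec_zero, mulVec_zero, sub_eq_zero] at hfeedback
    exact hx (eq_zero_of_observable hmin.2 hfeedback.symm hv)
  have hplant := hR.re_conj_mul_dotProduct_nonneg hmin.1 hμ0 hre him hfeedback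
  have hcontroller := hS.re_conj_mul_dotProduct_tf_mulVec_neg hneg hμ0 hre him hv
  exact hplant.not_gt hcontroller

/-- Stability of the positive feedback interconnection of an NI system with a possible simple
pole at the origin and a strictly negative SNI system. -/
theorem ni_pole_at_origin_stability {n ns m : ℕ}
    (A : Matrix (Fin n) (Fin n) ℝ) (B : Matrix (Fin n) (Fin m) ℝ)
    (C : Matrix (Fin m) (Fin n) ℝ)
    (As : Matrix (Fin ns) (Fin ns) ℝ) (Bs : Matrix (Fin ns) (Fin m) ℝ)
    (Cs : Matrix (Fin m) (Fin ns) ℝ) (Ds : Matrix (Fin m) (Fin m) ℝ)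
    (hmin : IsMinimal A B C) (hmins : IsMinimal As Bs Cs)
    (hstable : ∀ μ ∈ eigs A, μ.re ≤ 0)
    (hpole0 : (0 : ℂ) ∈ eigs A →
      ∃ K : Matrix (Fin m) (Fin m) ℂ,
        Tendsto (fun s : ℂ => s • tf A B C 0 s) (𝓝[≠] (0 : ℂ)) (𝓝 K) ∧ K.PosSemidef)
    (hNIfr : ∀ ω : ℝ, 0 < ω → (Complex.I * ω) ∉ eigs A →
      (Complex.I • (tf A B C 0 (Complex.I * ω) - (tf A B C 0 (Complex.I * ω))ᴴ)).PosSemidef)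
    (hNIres : ∀ ω : ℝ, 0 < ω → (Complex.I * ω) ∈ eigs A →
      ∃ K : Matrix (Fin m) (Fin m) ℂ,
        Tendsto (fun s : ℂ => (s - Complex.I * ω) • Complex.I • tf A B C 0 s)
          (𝓝[≠] (Complex.I * ω)) (𝓝 K) ∧ K.PosSemidef)
    (hSNI : IsSNI As Bs Cs Ds)
    (hneg : ∀ s : ℂ, 0 ≤ s.re →
      (-(tf As Bs Cs Ds s + (tf As Bs Cs Ds s)ᴴ)).PosDef)
    (hns : (A + B * (Ds - Cs * As⁻¹ * Bs) * C).det ≠ 0) :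
    IsHurwitz (Matrix.fromBlocks (A + B * Ds * C) (B * Cs) (Bs * C) As) :=
  ni_pole_at_origin_stability_general hmin
    ⟨hstable, fun h => (hpole0 h).imp fun _ hK => hK.1, hNIfr, hNIres⟩ hSNI (hneg 0 le_rfl) hns
end
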